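/- Let n ≥ 1 and let a₀, …, a_{n−1} ∈ ℝ³ be nonzero, pairwise linearly independent vectors defining a complexified-real central arrangement in ℂ³ with Milnor fiber F and basepoint z₀ ∈ F. Suppose there exists j < n such that every nonzero v ∈ ℂ³ with ℓⱼ(v) = 0 satisfies m_v = 2 or gcd(m_v, n) = 1 (vectors v with m_v = 1 automatically satisfy gcd(1, n) = 1, so the condition only constrains the multiple points of the line ker ℓⱼ). Then Ab π₁(F, z₀) is isomorphic to the free abelian group ℤ^{n−1}; in particular H₁(F;ℤ) is torsion-free of rank n−1. -/

import Mathlib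

section PartA
variable {G : Type*} [Group G] {ι : Type*} [Fintype ι]

/-- Total degree. -/
def degA (w : ι → G →* Multiplicative ℤ) : G →* Multiplicative ℤ := ∏ l, w l

lemma degA_apply (w : ι → G →* Multiplicative ℤ) (g : G) :
    (degA w g).toAdd = ∑ l, (w l g).toAdd := by
  simp [degA, MonoidHom.finsetProd_apply]

/-- Elements of degree divisible by `n = |ι| + 1`. -/
def KA (w : ι → G →* Multiplicative ℤ) : Subgroup G where
  carrier := {g | ((Fintype.card ι : ℤ) + 1) ∣ (degA w g).toAdd}
  one_mem' := by simp
  mul_mem' := by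
    intro a b ha hb
    simp only [Set.mem_ofPred_eq, map_mul, toAdd_mul] at *
    exact dvd_add ha hb
  inv_mem' := by
    intro a ha
    simp only [Set.mem_ofPred_eq, map_inv, toAdd_inv] at *
    exact (dvd_neg).2 ha

lemma mem_KA (w : ι → G →* Multiplicative ℤ) (g : G) :
    g ∈ KA w ↔ ((Fintype.card ι : ℤ) + 1) ∣ (degA w g).toAdd := Iff.rfl

instance KA_normal (w : ι → G →* Multiplicative ℤ) : (KA w).Normal := by
  constructor
  intro a ha g
  rw [mem_KA] at *
  simpa using ha

theorem algA (w : ι → G →* Multiplicative ℤ) (y : ι → G)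
    (hgen : Subgroup.closure (Set.range y) = ⊤) (T : G) (hT : ∀ l, (w l T).toAdd = 1)
    (hcomm : ∀ k, Commute (y k) T ∨ ∃ (D : G) (m : ℕ), Commute D (y k) ∧ Commute D T ∧
      ∑ l, (w l D).toAdd = (Fintype.card ι : ℤ) + 1 - m ∧ Nat.gcd m (Fintype.card ι + 1) = 1)
    (hind : ∀ c : ι → ℤ, (∀ l, ∑ k, c k * (w l (y k)).toAdd = 0) → c = 0) :
    Nonempty (Additive (Abelianization (KA w)) ≃+ (ι → ℤ)) := by
  classical
  set N : ℤ := (Fintype.card ι : ℤ) + 1 with hN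
  have hdT : (degA w T).toAdd = N - 1 := by
    rw [degA_apply]; simp [hT, hN]
  set d : G → ℤ := fun g => (degA w g).toAdd with hd
  have hdmul : ∀ g h, d (g * h) = d g + d h := by intro g h; simp [hd]
  have hdinv : ∀ g, d g⁻¹ = - d g := by intro g; simp [hd]
  have hdz : ∀ (g : G) (i : ℤ), d (g ^ i) = i * d g := by intro g i; simp [hd]
  have hdT' : d T = N - 1 := hdT
  let A := Abelianization (KA w)
  have hofs : ∀ x : A, ∃ g, Abelianization.of g = x := fun x => QuotientGroup.mk_surjective x
  let θ : G → KA w := fun g => ⟨g * T ^ d g, by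
    rw [mem_KA]; change N ∣ d _
    rw [hdmul, hdz, hdT']; exact ⟨d g, by ring⟩⟩
  let e : ι → KA w := fun k => θ (y k)
  let S0 : Subgroup A := Subgroup.closure (Set.range fun k => Abelianization.of (e k))
  let cj : G → KA w →* KA w := fun g => (MulAut.conjNormal g).toMonoidHom
  have cj_coe : ∀ g (x : KA w), ((cj g x : KA w) : G) = g * x * g⁻¹ := by
    intro g x; simp [cj]
  have cj_mul : ∀ g h (x : KA w), cj (g * h) x = cj g (cj h x) := by
    intro g h x; ext; simp [cj_coe]; group
  have cj_one : ∀ (x : KA w), cj 1 x = x := by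
    intro x; ext; simp [cj_coe]
  let ψ : G → A →* A := fun g => Abelianization.map (cj g)
  have ψ_of : ∀ g (x : KA w), ψ g (Abelianization.of x) = Abelianization.of (cj g x) := by
    intro g x; exact Abelianization.map_of _ _
  have ψ_mul : ∀ g h x, ψ (g * h) x = ψ g (ψ h x) := by
    intro g h x
    obtain ⟨x, rfl⟩ := hofs x
    simp [ψ_of, cj_mul]
  have ψ_one : ∀ x, ψ 1 x = x := by
    intro x
    obtain ⟨x, rfl⟩ := hofs x
    simp [ψ_of, cj_one]
  let St : Subgroup G :=
    { carrier := {h | ∀ x ∈ S0, ψ h x = x}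
      one_mem' := fun x _ => ψ_one x
      mul_mem' := by
        intro g h hg hh x hx
        rw [ψ_mul, hh x hx, hg x hx]
      inv_mem' := by
        intro g hg x hx
        conv_lhs => rw [← hg x hx]
        rw [← ψ_mul]; simp [ψ_one] }
  have ofconj : ∀ (κ x : KA w), Abelianization.of (cj κ x) = Abelianization.of x := by
    intro κ x
    have : cj κ x = κ * x * κ⁻¹ := by ext; simp [cj_coe]
    rw [this]; simp
  have he : ∀ k, Abelianization.of (cj T (e k)) = Abelianization.of (e k) := by
    intro k
    rcases hcomm k with h | ⟨D, m, h1, h2, h3, h4⟩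
    · congr 1
      ext
      rw [cj_coe]
      have : Commute (y k * T ^ d (y k)) T := h.mul_left ((Commute.refl T).zpow_left _)
      change T * (y k * T ^ d (y k)) * T⁻¹ = y k * T ^ d (y k)
      rw [← this.eq]; group
    · obtain ⟨p, q, hpq⟩ := Nat.isCoprime_iff_coprime.2 h4
      have hdD : d D = N - m := by rw [← h3, ← degA_apply]
      have hκ : T * D ^ (-p) ∈ KA w := by
        rw [mem_KA]; change N ∣ d _
        rw [hdmul, hdz, hdT', hdD]
        refine ⟨1 - p - q, ?_⟩
        have : (p * m + q * N : ℤ) = 1 := by rw [← hpq, hN]; push_cast; ring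
        linear_combination this
      have hc : Commute (D ^ p) (y k * T ^ d (y k)) :=
        (h1.mul_right (h2.zpow_right _)).zpow_left _
      have : cj T (e k) = cj (⟨_, hκ⟩ : KA w) (e k) := by
        have : cj T (e k) = cj (T * D ^ (-p)) (cj (D ^ p) (e k)) := by
          rw [← cj_mul]; simp
        rw [this]
        congr 1
        ext
        rw [cj_coe]
        change D ^ p * (y k * T ^ d (y k)) * (D ^ p)⁻¹ = y k * T ^ d (y k)
        rw [hc.eq]; group
      rw [this, ofconj]
  have hTSt : T ∈ St := by
    intro x hx
    induction hx using Subgroup.closure_induction with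
    | mem x hx => obtain ⟨k, rfl⟩ := hx; rw [ψ_of]; exact he k
    | one => simp
    | mul x y _ _ hx hy => rw [map_mul, hx, hy]
    | inv x _ hx => rw [map_inv, hx]
  have hTz : ∀ i : ℤ, ∀ x ∈ S0, ψ (T ^ i) x = x := fun i => St.zpow_mem hTSt i
  have θmul : ∀ g h, θ (g * h) = θ g * cj (T ^ (- d g)) (θ h) := by
    intro g h; ext
    simp only [Subgroup.coe_mul, cj_coe]
    change g * h * T ^ d (g * h) = g * T ^ d g * (T ^ (- d g) * (h * T ^ d h) * (T ^ (- d g))⁻¹)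
    rw [hdmul, add_comm, zpow_add]; group
  have θinv : ∀ g, θ (g⁻¹) = cj (T ^ (d g)) (θ g)⁻¹ := by
    intro g; ext
    simp only [cj_coe]
    change g⁻¹ * T ^ d (g⁻¹) = T ^ d g * (g * T ^ d g)⁻¹ * (T ^ (d g))⁻¹
    rw [hdinv]; group
  let H : Subgroup G :=
    { carrier := {g | Abelianization.of (θ g) ∈ S0}
      one_mem' := by
        have : θ 1 = 1 := by ext; simp [θ, hd]
        simp [this, S0.one_mem]
      mul_mem' := by
        intro g h hg hh
        simp only [Set.mem_ofPred_eq] at *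
        rw [θmul, map_mul, ← ψ_of, hTz _ _ hh]
        exact S0.mul_mem hg hh
      inv_mem' := by
        intro g hg
        simp only [Set.mem_ofPred_eq] at *
        rw [θinv, ← ψ_of, map_inv, hTz _ _ (S0.inv_mem hg)]
        exact S0.inv_mem hg }
  have hH : H = ⊤ := by
    rw [eq_top_iff, ← hgen, Subgroup.closure_le]
    rintro _ ⟨k, rfl⟩
    exact Subgroup.subset_closure ⟨k, rfl⟩
  have hHall : ∀ g, Abelianization.of (θ g) ∈ S0 := by
    intro g
    have : g ∈ H := by rw [hH]; trivial
    exact this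
  have hS0 : ∀ x : A, x ∈ S0 := by
    intro x
    obtain ⟨g, rfl⟩ := hofs x
    obtain ⟨q, hq⟩ := (mem_KA w g).1 g.2
    have h1 : θ g = g * (θ T) ^ q := by
      ext
      simp only [Subgroup.coe_mul, Subgroup.coe_zpow]
      change (g : G) * T ^ d g = g * (T * T ^ d T) ^ q
      have : d g = N * q := hq
      rw [this, hdT']
      congr 1
      rw [← zpow_one_add, ← zpow_mul]; congr 1; ring
    have h2 : Abelianization.of g = Abelianization.of (θ g) * (Abelianization.of (θ T) ^ q)⁻¹ := by
      rw [h1]; simp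
    rw [h2]
    exact S0.mul_mem (hHall g) (S0.inv_mem (S0.zpow_mem (hHall T) q))
  let Φ : (ι → ℤ) →+ Additive A :=
    { toFun := fun c => ∑ k, c k • Additive.ofMul (Abelianization.of (e k))
      map_zero' := by simp
      map_add' := by intro a b; simp [add_smul, Finset.sum_add_distrib] }
  have hsurj : Function.Surjective Φ := by
    rw [← AddMonoidHom.range_eq_top, eq_top_iff]
    intro x _
    have : ∀ z : A, z ∈ S0 → Additive.ofMul z ∈ Φ.range := by
      intro z hz
      induction hz using Subgroup.closure_induction with
      | mem x hx =>
        obtain ⟨k, rfl⟩ := hx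
        exact ⟨Pi.single k 1, by simp [Φ, Pi.single_apply, ite_smul]⟩
      | one => exact Φ.range.zero_mem
      | mul x y _ _ hx hy => exact Φ.range.add_mem hx hy
      | inv x _ hx => exact Φ.range.neg_mem hx
    exact this x.toMul (hS0 _)
  have hinj : Function.Injective Φ := by
    rw [injective_iff_map_eq_zero]
    intro c hc
    let W : ι → A →* Multiplicative ℤ := fun l => Abelianization.lift ((w l).comp (KA w).subtype)
    have hW : ∀ l, ∑ k, c k * ((w l (y k)).toAdd + d (y k)) = 0 := by
      intro l
      have := congrArg (MonoidHom.toAdditive (W l)) hc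
      have h2 : ∀ k, (W l (Abelianization.of (e k))).toAdd = (w l (y k)).toAdd + d (y k) := by
        intro k
        change (w l (y k * T ^ d (y k))).toAdd = _
        simp [hT]
      have h3 : (MonoidHom.toAdditive (W l)) (Φ c) =
          Additive.ofMul (Multiplicative.ofAdd (∑ k, c k * ((w l (y k)).toAdd + d (y k)))) := by
        simp only [Φ, AddMonoidHom.coe_mk, ZeroHom.coe_mk, map_sum, map_zsmul]
        rw [ofAdd_sum, ofMul_prod]
        refine Finset.sum_congr rfl fun k _ => ?_
        rw [← h2]
        change _ = Additive.ofMul (Multiplicative.ofAdd (c k * _))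
        rw [← smul_eq_mul, ofAdd_zsmul, ofMul_zpow]; rfl
      rw [h3, map_zero] at this
      exact this
    set V : ι → ℤ := fun l => ∑ k, c k * (w l (y k)).toAdd with hV
    have hsum : ∑ k, c k * d (y k) = ∑ l, V l := by
      simp only [hV, hd, degA_apply, Finset.mul_sum]
      rw [Finset.sum_comm]
    have hVl : ∀ l, V l + ∑ l, V l = 0 := by
      intro l; rw [← hsum, ← hW l, hV, ← Finset.sum_add_distrib]
      exact Finset.sum_congr rfl fun k _ => by ring
    have : N * ∑ l, V l = 0 := by
      have := Finset.sum_congr (rfl : (Finset.univ : Finset ι) = _) fun l _ => hVl l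
      rw [Finset.sum_add_distrib] at this
      simp at this
      rw [hN]; linarith
    have hNpos : N ≠ 0 := by positivity
    have h0 : ∑ l, V l = 0 := by
      rcases mul_eq_zero.1 this with h | h
      · exact absurd h hNpos
      · exact h
    exact hind c fun l => by have := hVl l; rw [h0, add_zero] at this; exact this
  exact ⟨(AddEquiv.ofBijective Φ ⟨hinj, hsurj⟩).symm⟩

end PartA


open scoped unitInterval

section PartB
/-- punctured plane -/
abbrev Cs : Type := {z : ℂ // z ≠ 0}

variable {X : Type*} [TopologicalSpace X]

/-- `δ` is the increment of a continuous logarithm of `f` along `p`. -/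
def LogInc (f : C(X, Cs)) {x y : X} (p : Path x y) (δ : ℂ) : Prop :=
  ∃ L : C(I, ℂ), (∀ t, Complex.exp (L t) = (f (p t) : ℂ)) ∧ L 1 - L 0 = δ

lemma LogInc.exists_of (f : C(X, Cs)) {x y : X} (p : Path x y) (e : ℂ)
    (he : Complex.exp e = f x) :
    ∃ L : C(I, ℂ), (∀ t, Complex.exp (L t) = (f (p t) : ℂ)) ∧ L 0 = e := by
  have h0 : (f.comp p.toContinuousMap) 0 = (⟨_, Complex.exp_ne_zero e⟩ : Cs) := by
    apply Subtype.ext; simp [he]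
  refine ⟨Complex.isCoveringMap_exp.liftPath (f.comp p.toContinuousMap) e h0, fun t => ?_, ?_⟩
  · have := congrFun (Complex.isCoveringMap_exp.liftPath_lifts (f.comp p.toContinuousMap) e h0) t
    exact congrArg Subtype.val this
  · exact Complex.isCoveringMap_exp.liftPath_zero _ _ _

lemma LogInc.exists (f : C(X, Cs)) {x y : X} (p : Path x y) : ∃ δ, LogInc f p δ := by
  obtain ⟨L, hL, h0⟩ := LogInc.exists_of f p _ (Complex.exp_log (f x).2)
  exact ⟨_, L, hL, rfl⟩

lemma LogInc.unique {f : C(X, Cs)} {x y : X} {p q : Path x y} (h : p.Homotopic q) {δ δ' : ℂ}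
    (h1 : LogInc f p δ) (h2 : LogInc f q δ') : δ = δ' := by
  obtain ⟨L, hL, rfl⟩ := h1
  obtain ⟨M, hM, rfl⟩ := h2
  set M' : C(I, ℂ) := ⟨fun t => M t - M 0 + L 0, by fun_prop⟩ with hM'
  have hM'e : ∀ t, Complex.exp (M' t) = (f (q t) : ℂ) := by
    intro t
    have : Complex.exp (M 0) = Complex.exp (L 0) := by rw [hM, hL]; simp
    simp only [hM', ContinuousMap.coe_mk, Complex.exp_add, Complex.exp_sub, this, hM]
    field_simp [Complex.exp_ne_zero]
  have h0 : (f.comp p.toContinuousMap) 0 = (⟨_, Complex.exp_ne_zero (L 0)⟩ : Cs) := by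
    apply Subtype.ext; simp [hL]
  have h0' : (f.comp q.toContinuousMap) 0 = (⟨_, Complex.exp_ne_zero (L 0)⟩ : Cs) := by
    apply Subtype.ext; simp [hL]
  have e1 := (Complex.isCoveringMap_exp.eq_liftPath_iff' h0 (Γ := L)).2
    ⟨by funext t; apply Subtype.ext; exact hL t, rfl⟩
  have e2 := (Complex.isCoveringMap_exp.eq_liftPath_iff' h0' (Γ := M')).2
    ⟨by funext t; apply Subtype.ext; exact hM'e t, by simp [hM']⟩
  have hr : (f.comp p.toContinuousMap).HomotopicRel (f.comp q.toContinuousMap) {0, 1} := by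
    obtain ⟨F⟩ := h
    exact ⟨F.compContinuousMap f⟩
  have := Complex.isCoveringMap_exp.liftPath_apply_one_eq_of_homotopicRel hr (L 0) h0 h0'
  rw [← e1, ← e2] at this
  rw [this]; simp [hM']

lemma LogInc.trans {f : C(X, Cs)} {x y z : X} {p : Path x y} {q : Path y z} {δ δ' : ℂ}
    (h1 : LogInc f p δ) (h2 : LogInc f q δ') : LogInc f (p.trans q) (δ + δ') := by
  obtain ⟨L, hL, rfl⟩ := h1
  obtain ⟨M, hM, rfl⟩ := h2
  let LP : Path (L 0) (L 1) := ⟨L, rfl, rfl⟩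
  let MP : Path (L 1) (M 1 - M 0 + L 1) :=
    ⟨⟨fun t => M t - M 0 + L 1, by fun_prop⟩, by simp, by simp⟩
  have hh : Complex.exp (M 0) = Complex.exp (L 1) := by rw [hM, hL]; simp
  refine ⟨(LP.trans MP).toContinuousMap, fun t => ?_, ?_⟩
  · change Complex.exp ((LP.trans MP) t) = _
    simp only [Path.trans_apply]
    split_ifs
    · exact hL _
    · change Complex.exp (M _ - M 0 + L 1) = _
      rw [Complex.exp_add, Complex.exp_sub, hh, hM]
      field_simp [Complex.exp_ne_zero]
  · change (LP.trans MP) 1 - (LP.trans MP) 0 = _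
    simp; ring

lemma LogInc.symm {f : C(X, Cs)} {x y : X} {p : Path x y} {δ : ℂ}
    (h1 : LogInc f p δ) : LogInc f p.symm (-δ) := by
  obtain ⟨L, hL, rfl⟩ := h1
  refine ⟨⟨fun t => L (σ t), by fun_prop⟩, fun t => ?_, ?_⟩
  · simp [hL, Path.symm]
  · simp

lemma LogInc.loop {f : C(X, Cs)} {x : X} {p : Path x x} {δ : ℂ}
    (h1 : LogInc f p δ) : ∃ k : ℤ, δ = k * (2 * Real.pi * Complex.I) := by
  obtain ⟨L, hL, rfl⟩ := h1
  have : Complex.exp (L 1) = Complex.exp (L 0) := by rw [hL, hL]; simp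
  obtain ⟨k, hk⟩ := Complex.exp_eq_exp_iff_exists_int.1 this
  exact ⟨k, by rw [hk]; ring⟩

lemma wind_exists (f : C(X, Cs)) {x : X} (g : FundamentalGroup X x) :
    ∃ k : ℤ, ∀ p : Path x x, Path.Homotopic.Quotient.mk p = g →
      LogInc f p (k * (2 * Real.pi * Complex.I)) := by
  obtain ⟨p, rfl⟩ := Path.Homotopic.Quotient.mk_surjective g
  obtain ⟨δ, hδ⟩ := LogInc.exists f p
  obtain ⟨k, rfl⟩ := hδ.loop
  refine ⟨k, fun q hq => ?_⟩
  obtain ⟨δ', hδ'⟩ := LogInc.exists f q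
  rw [Path.Homotopic.Quotient.eq] at hq
  rwa [← hδ'.unique hq hδ]

/-- winding number of `f` along a loop class. -/
noncomputable def windZ (f : C(X, Cs)) {x : X} (g : FundamentalGroup X x) : ℤ :=
  (wind_exists f g).choose

lemma windZ_spec (f : C(X, Cs)) {x : X} (p : Path x x) :
    LogInc f p ((windZ f (Path.Homotopic.Quotient.mk p : FundamentalGroup X x) : ℤ) *
      (2 * Real.pi * Complex.I)) :=
  (wind_exists f (Path.Homotopic.Quotient.mk p : FundamentalGroup X x)).choose_spec p rfl

lemma windZ_eq (f : C(X, Cs)) {x : X} {p : Path x x} {k : ℤ}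
    (h : LogInc f p (k * (2 * Real.pi * Complex.I))) :
    windZ f (Path.Homotopic.Quotient.mk p : FundamentalGroup X x) = k := by
  have := (windZ_spec f p).unique (Path.Homotopic.refl p) h
  have h2 : (2 * Real.pi * Complex.I : ℂ) ≠ 0 := by
    simp [Real.pi_ne_zero]
  exact_mod_cast mul_right_cancel₀ h2 this

lemma windZ_mul (f : C(X, Cs)) {x : X} (g h : FundamentalGroup X x) :
    windZ f (g * h) = windZ f g + windZ f h := by
  obtain ⟨p, rfl⟩ := Path.Homotopic.Quotient.mk_surjective g
  obtain ⟨q, rfl⟩ := Path.Homotopic.Quotient.mk_surjective h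
  change windZ f (Path.Homotopic.Quotient.mk (q.trans p) : FundamentalGroup X x) = _
  apply windZ_eq
  convert (windZ_spec f q).trans (windZ_spec f p) using 1
  push_cast; ring

/-- winding number as a homomorphism. -/
noncomputable def wind (f : C(X, Cs)) (x : X) : FundamentalGroup X x →* Multiplicative ℤ :=
  MonoidHom.mk' (fun g => Multiplicative.ofAdd (windZ f g)) (by
    intro g h; rw [windZ_mul]; rfl)

lemma wind_toAdd (f : C(X, Cs)) (x : X) (g : FundamentalGroup X x) :
    (wind f x g).toAdd = windZ f g := rfl

lemma LogInc.prod {κ : Type*} (s : Finset κ) (f : κ → C(X, Cs)) (F : C(X, Cs)) {x y : X}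
    (p : Path x y) (c : ℂ) (hc : c ≠ 0)
    (hF : ∀ x, (F x : ℂ) = c * ∏ k ∈ s, (f k x : ℂ)) (δ : κ → ℂ)
    (h : ∀ k ∈ s, LogInc (f k) p (δ k)) : LogInc F p (∑ k ∈ s, δ k) := by
  classical
  have : ∀ k : κ, ∃ L : C(I, ℂ), k ∈ s →
      (∀ t, Complex.exp (L t) = (f k (p t) : ℂ)) ∧ L 1 - L 0 = δ k := by
    intro k
    by_cases hk : k ∈ s
    · obtain ⟨L, hL⟩ := h k hk; exact ⟨L, fun _ => hL⟩
    · exact ⟨0, fun h => absurd h hk⟩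
  choose L hL using this
  refine ⟨⟨fun t => Complex.log c + ∑ k ∈ s, L k t, by fun_prop⟩, fun t => ?_, ?_⟩
  · simp only [ContinuousMap.coe_mk, Complex.exp_add, Complex.exp_log hc, Complex.exp_sum, hF]
    congr 1
    exact Finset.prod_congr rfl fun k hk => (hL k hk).1 t
  · simp only [ContinuousMap.coe_mk]
    rw [add_sub_add_left_eq_sub, ← Finset.sum_sub_distrib]
    exact Finset.sum_congr rfl fun k hk => (hL k hk).2

lemma windZ_prod {κ : Type*} (s : Finset κ) (f : κ → C(X, Cs)) (F : C(X, Cs)) {x : X}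
    (c : ℂ) (hc : c ≠ 0)
    (hF : ∀ x, (F x : ℂ) = c * ∏ k ∈ s, (f k x : ℂ)) (g : FundamentalGroup X x) :
    windZ F g = ∑ k ∈ s, windZ (f k) g := by
  obtain ⟨p, rfl⟩ := Path.Homotopic.Quotient.mk_surjective g
  apply windZ_eq
  have := LogInc.prod s f F p c hc hF _ fun k _ => windZ_spec (f k) p
  rw [← Finset.sum_mul] at this
  convert this using 2
  push_cast; rfl

lemma windZ_conj (f : C(X, Cs)) {x y : X} (L : Path x y) (p : Path y y) :
    windZ f (Path.Homotopic.Quotient.mk ((L.trans p).trans L.symm) : FundamentalGroup X x) =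
      windZ f (Path.Homotopic.Quotient.mk p : FundamentalGroup X y) := by
  apply windZ_eq
  obtain ⟨δ, hδ⟩ := LogInc.exists f L
  convert (hδ.trans (windZ_spec f p)).trans hδ.symm using 1
  ring

/-- winding number of a circle not enclosing `0`, or enclosing `0`. -/
lemma windZ_of_circle (f : C(X, Cs)) {x : X} (p : Path x x) (c ρ : ℂ)
    (hp : ∀ t : I, (f (p t) : ℂ) = c + ρ * Complex.exp (2 * Real.pi * Complex.I * (t : ℝ))) :
    (‖c‖ < ‖ρ‖ → windZ f (Path.Homotopic.Quotient.mk p : FundamentalGroup X x) = 1) ∧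
    (‖ρ‖ < ‖c‖ → windZ f (Path.Homotopic.Quotient.mk p : FundamentalGroup X x) = 0) := by
  have key : ∀ z : ℂ, ‖z‖ < 1 → 1 + z ∈ Complex.slitPlane := fun z hz =>
    Complex.mem_slitPlane_of_norm_lt_one hz
  have hnorm : ∀ t : ℝ, ‖Complex.exp (2 * Real.pi * Complex.I * (t : ℝ))‖ = 1 := by
    intro t; rw [Complex.norm_exp]; simp
  have hnorm' : ∀ t : ℝ, ‖Complex.exp (-(2 * Real.pi * Complex.I * (t : ℝ)))‖ = 1 := by
    intro t; rw [Complex.norm_exp]; simp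
  have he1 : Complex.exp (2 * Real.pi * Complex.I) = 1 := Complex.exp_two_pi_mul_I
  have he2 : Complex.exp (-(2 * Real.pi * Complex.I)) = 1 := by
    rw [Complex.exp_neg, he1, inv_one]
  constructor
  · intro h
    have hρ : ρ ≠ 0 := by
      rintro rfl; simp at h; exact absurd h (not_lt.2 (norm_nonneg _))
    have hs : ∀ t : I, 1 + (c / ρ) * Complex.exp (-(2 * Real.pi * Complex.I * (t : ℝ)))
        ∈ Complex.slitPlane := by
      intro t; apply key; rw [norm_mul, hnorm', mul_one, norm_div]
      rw [div_lt_one (by positivity)]; exact h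
    apply windZ_eq
    refine ⟨⟨fun t : I => Complex.log ρ + 2 * Real.pi * Complex.I * (t : ℝ) +
      Complex.log (1 + (c / ρ) * Complex.exp (-(2 * Real.pi * Complex.I * (t : ℝ)))), ?_⟩, ?_, ?_⟩
    · apply Continuous.add (by fun_prop)
      exact Continuous.clog (by fun_prop) hs
    · intro t
      simp only [ContinuousMap.coe_mk, Complex.exp_add, Complex.exp_log hρ]
      rw [Complex.exp_log (Complex.slitPlane_ne_zero (hs t)), hp, Complex.exp_neg]
      have := Complex.exp_ne_zero (2 * Real.pi * Complex.I * (t : ℝ))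
      field_simp; ring
    · simp [he2]
  · intro h
    have hρ : c ≠ 0 := by
      rintro rfl; simp at h; exact absurd h (not_lt.2 (norm_nonneg _))
    have hs : ∀ t : I, 1 + (ρ / c) * Complex.exp ((2 * Real.pi * Complex.I * (t : ℝ)))
        ∈ Complex.slitPlane := by
      intro t; apply key; rw [norm_mul, hnorm, mul_one, norm_div]
      rw [div_lt_one (by positivity)]; exact h
    apply windZ_eq
    refine ⟨⟨fun t : I => Complex.log c +
      Complex.log (1 + (ρ / c) * Complex.exp ((2 * Real.pi * Complex.I * (t : ℝ)))), ?_⟩, ?_, ?_⟩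
    · apply Continuous.add (by fun_prop)
      exact Continuous.clog (by fun_prop) hs
    · intro t
      simp only [ContinuousMap.coe_mk, Complex.exp_add, Complex.exp_log hρ]
      rw [Complex.exp_log (Complex.slitPlane_ne_zero (hs t)), hp]
      field_simp
    · simp [he1]

end PartB

open scoped unitInterval
section PartC
variable {Fs U : Type*} [TopologicalSpace Fs] [TopologicalSpace U]

theorem partC (q : C(Fs, U)) (ζ : C(Fs, Cs)) (f : C(U, Cs)) (n : ℕ) (hn : n ≠ 0)
    (hζ : ∀ z, (ζ z : ℂ) ^ n = f (q z))
    (r : {p : U × Cs // (p.2 : ℂ) ^ n = f p.1} → Fs) (hr : Continuous r)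
    (hq : ∀ p, q (r p) = p.1.1) (hrz : ∀ z, r ⟨(q z, ζ z), hζ z⟩ = z) (z₀ : Fs) :
    ∃ φ : FundamentalGroup Fs z₀ →* FundamentalGroup U (q z₀), Function.Injective φ ∧
      ∀ g, g ∈ φ.range ↔ (n : ℤ) ∣ windZ f g := by
  refine ⟨FundamentalGroup.map q z₀, ?_, ?_⟩
  · intro g g' h
    obtain ⟨p, rfl⟩ := Path.Homotopic.Quotient.mk_surjective g
    obtain ⟨p', rfl⟩ := Path.Homotopic.Quotient.mk_surjective g'
    have h' : (p.map q.continuous).Homotopic (p'.map q.continuous) := by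
      rw [← Path.Homotopic.Quotient.eq]
      exact h
    obtain ⟨H⟩ := h'
    change Path.Homotopic.Quotient.mk p = Path.Homotopic.Quotient.mk p'
    rw [Path.Homotopic.Quotient.eq]
    have cov := isCoveringMap_npow (𝕜 := ℂ) n (by exact_mod_cast hn)
    have h0 : (fun x : Cs ↦ (⟨x ^ n, pow_ne_zero n x.2⟩ : Cs)) ∘ (ζ.comp p.toContinuousMap) =
        (f.comp (p.map q.continuous).toContinuousMap) := by
      funext t; apply Subtype.ext; simp [hζ]
    have h1 : (fun x : Cs ↦ (⟨x ^ n, pow_ne_zero n x.2⟩ : Cs)) ∘ (ζ.comp p'.toContinuousMap) =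
        (f.comp (p'.map q.continuous).toContinuousMap) := by
      funext t; apply Subtype.ext; simp [hζ]
    have he : ∃ a ∈ ({0, 1} : Set I), (ζ.comp p.toContinuousMap) a = (ζ.comp p'.toContinuousMap) a :=
      ⟨0, by simp, by simp⟩
    let Z := cov.liftHomotopyRel (H.compContinuousMap f) he h0 h1
    have hZ : ∀ x, ((Z x : Cs) : ℂ) ^ n = f (H x) := by
      intro x
      have := congrFun (cov.liftHomotopy_lifts (H.compContinuousMap f).toContinuousMap
        (ζ.comp p.toContinuousMap) (fun a ↦ ((H.compContinuousMap f).apply_zero a).trans (congr_fun h0 a).symm)) x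
      exact congrArg Subtype.val this
    have hend : ∀ t : I, ∀ x ∈ ({0, 1} : Set I), r ⟨(H (t, x), Z (t, x)), hZ _⟩ = p x := by
      intro t x hx
      rw [← hrz (p x)]
      refine congrArg r (Subtype.ext (Prod.ext ?_ ?_))
      · exact H.prop' t x hx
      · exact Z.prop' t x hx
    refine ⟨⟨⟨⟨fun x => r ⟨(H x, Z x), hZ x⟩, ?_⟩, ?_, ?_⟩, ?_⟩⟩
    · exact hr.comp (Continuous.subtype_mk (H.continuous.prodMk Z.continuous) _)
    · intro t
      rw [show p.toContinuousMap t = p t from rfl, ← hrz (p t)]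
      refine congrArg r (Subtype.ext (Prod.ext ?_ ?_))
      · exact H.apply_zero t
      · exact Z.apply_zero t
    · intro t
      rw [show p'.toContinuousMap t = p' t from rfl, ← hrz (p' t)]
      refine congrArg r (Subtype.ext (Prod.ext ?_ ?_))
      · exact H.apply_one t
      · exact Z.apply_one t
    · intro t x hx
      exact hend t x hx
  · intro g
    constructor
    · rintro ⟨g, rfl⟩
      obtain ⟨p, rfl⟩ := Path.Homotopic.Quotient.mk_surjective g
      change (n : ℤ) ∣ windZ f (Path.Homotopic.Quotient.mk (p.map q.continuous) :
        FundamentalGroup U (q z₀))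
      refine ⟨windZ ζ (Path.Homotopic.Quotient.mk p : FundamentalGroup Fs z₀), ?_⟩
      apply windZ_eq
      obtain ⟨L, hL, hL1⟩ := windZ_spec ζ p
      refine ⟨⟨fun t => n * L t, by fun_prop⟩, fun t => ?_, ?_⟩
      · simp only [ContinuousMap.coe_mk, Complex.exp_nat_mul, hL]
        simp [hζ]
      · simp only [ContinuousMap.coe_mk]
        rw [← mul_sub, hL1]; push_cast; ring
    · rintro ⟨k, hk⟩
      obtain ⟨p, rfl⟩ := Path.Homotopic.Quotient.mk_surjective g
      obtain ⟨L, hL, hL1⟩ := windZ_spec f p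
      rw [hk] at hL1
      have hnC : (n : ℂ) ≠ 0 := by exact_mod_cast hn
      let Zt : I → Cs := fun t => ⟨ζ z₀ * Complex.exp ((L t - L 0) / n),
        mul_ne_zero (ζ z₀).2 (Complex.exp_ne_zero _)⟩
      have hZ : ∀ t, (Zt t : ℂ) ^ n = f (p t) := by
        intro t
        simp only [Zt, mul_pow, ← Complex.exp_nat_mul, hζ]
        rw [mul_div_cancel₀ _ hnC, Complex.exp_sub, hL, hL]
        have := (f (q z₀)).2
        simp; field_simp
      have hZc : Continuous Zt := by
        apply Continuous.subtype_mk; fun_prop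
      have hZ0 : Zt 0 = ζ z₀ := by apply Subtype.ext; simp [Zt]
      have hZ1 : Zt 1 = ζ z₀ := by
        apply Subtype.ext
        simp only [Zt, hL1]
        have : (((n * k : ℤ) : ℂ) * (2 * Real.pi * Complex.I)) / n = k * (2 * Real.pi * Complex.I) := by
          push_cast; field_simp
        rw [this, Complex.exp_int_mul_two_pi_mul_I]; simp
      let P : Path z₀ z₀ := ⟨⟨fun t => r ⟨(p t, Zt t), hZ t⟩,
        hr.comp (Continuous.subtype_mk (p.continuous.prodMk hZc) _)⟩, by
          conv_rhs => rw [← hrz z₀]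
          simp [hZ0], by
          conv_rhs => rw [← hrz z₀]
          simp [hZ1]⟩
      refine ⟨(Path.Homotopic.Quotient.mk P : FundamentalGroup Fs z₀), ?_⟩
      change Path.Homotopic.Quotient.mk (P.map q.continuous) = Path.Homotopic.Quotient.mk p
      congr 1
      ext t
      exact hq _

end PartC

open scoped unitInterval Topology

section PartD
variable {E : Type*} [NormedAddCommGroup E] [NormedSpace ℝ E] {S : Set E}

/-- path homotopy classes -/
abbrev PQ {X : Type*} [TopologicalSpace X] (x y : X) := Path.Homotopic.Quotient x y

/-- transport of a set of classes along a class -/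
def trp {X : Type*} [TopologicalSpace X] {b x y : X} (γ : PQ x y) (A : Set (PQ b x)) :
    Set (PQ b y) := (fun p => p.trans γ) '' A

lemma trp_trp {X : Type*} [TopologicalSpace X] {b x y z : X} (γ : PQ x y) (δ : PQ y z)
    (A : Set (PQ b x)) : trp δ (trp γ A) = trp (γ.trans δ) A := by
  simp [trp, Set.image_image, Path.Homotopic.Quotient.trans_assoc]

lemma trp_refl {X : Type*} [TopologicalSpace X] {b x : X} (A : Set (PQ b x)) :
    trp (Path.Homotopic.Quotient.refl x) A = A := by
  simp [trp]

lemma trp_inj {X : Type*} [TopologicalSpace X] {b x y : X} (γ : PQ x y) :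
    Function.Injective (trp γ : Set (PQ b x) → Set (PQ b y)) := by
  intro A B h
  have := congrArg (trp γ.symm) h
  simpa [trp_trp, trp_refl, Path.Homotopic.Quotient.trans_symm] using this

lemma homotopic_of_segment {x y : S} (p q : Path x y)
    (h : ∀ t, segment ℝ (p t : E) (q t) ⊆ S) : p.Homotopic q := by
  refine ⟨⟨⟨⟨fun st => ⟨AffineMap.lineMap (p st.2 : E) (q st.2 : E) (st.1 : ℝ), ?_⟩, ?_⟩, ?_, ?_⟩, ?_⟩⟩
  · apply h st.2
    rw [segment_eq_image_lineMap]
    exact ⟨_, st.1.2, rfl⟩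
  · apply Continuous.subtype_mk
    simp only [AffineMap.lineMap_apply_module]
    fun_prop
  · intro t; simp
  · intro t; simp
  · intro t x hx
    apply Subtype.ext
    rcases hx with rfl | rfl
    · simp
    · simp

/-- straight path -/
def segP (x y : S) (h : segment ℝ (x : E) y ⊆ S) : Path x y where
  toFun t := ⟨AffineMap.lineMap (x : E) (y : E) (t : ℝ), by
    apply h; rw [segment_eq_image_lineMap]; exact ⟨_, t.2, rfl⟩⟩
  continuous_toFun := by
    apply Continuous.subtype_mk
    simp only [AffineMap.lineMap_apply_module]
    fun_prop
  source' := by simp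
  target' := by simp

lemma segP_mem (x y : S) (h : segment ℝ (x : E) y ⊆ S) (t : I) :
    (segP x y h t : E) ∈ segment ℝ (x : E) y := by
  rw [segment_eq_image_lineMap]; exact ⟨_, t.2, rfl⟩

lemma homotopic_of_convex {C : Set E} (hC : Convex ℝ C) (hCS : C ⊆ S) {x y : S} (p q : Path x y)
    (hp : ∀ t, (p t : E) ∈ C) (hq : ∀ t, (q t : E) ∈ C) : p.Homotopic q :=
  homotopic_of_segment p q fun t => (hC.segment_subset (hp t) (hq t)).trans hCS

open Classical in
/-- transport along the straight segment -/
noncomputable def tr {b : S} (x y : S) (A : Set (PQ b x)) : Set (PQ b y) :=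
  if h : segment ℝ (x : E) y ⊆ S then trp (Path.Homotopic.Quotient.mk (segP x y h)) A else ∅

lemma tr_eq {b x y : S} (h : segment ℝ (x : E) y ⊆ S) (A : Set (PQ b x)) :
    tr x y A = trp (Path.Homotopic.Quotient.mk (segP x y h)) A := by
  simp [tr, h]

lemma tr_inj {b x y : S} (h : segment ℝ (x : E) y ⊆ S) :
    Function.Injective (tr x y : Set (PQ b x) → Set (PQ b y)) := by
  intro A B hAB
  rw [tr_eq h, tr_eq h] at hAB
  exact trp_inj _ hAB

lemma trp_eq_tr {b : S} {C : Set E} (hC : Convex ℝ C) (hCS : C ⊆ S) {x y : S} (p : Path x y)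
    (hp : ∀ t, (p t : E) ∈ C) (A : Set (PQ b x)) :
    trp (Path.Homotopic.Quotient.mk p) A = tr x y A := by
  have hx : (x : E) ∈ C := by simpa using hp 0
  have hy : (y : E) ∈ C := by simpa using hp 1
  have hs := hC.segment_subset hx hy
  rw [tr_eq (hs.trans hCS)]
  congr 1
  rw [Path.Homotopic.Quotient.eq]
  exact homotopic_of_convex hC hCS _ _ hp fun t => hs (segP_mem _ _ _ t)

lemma tr_tr {b : S} {C : Set E} (hC : Convex ℝ C) (hCS : C ⊆ S) {x y z : S}
    (hx : (x : E) ∈ C) (hy : (y : E) ∈ C) (hz : (z : E) ∈ C) (A : Set (PQ b x)) :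
    tr y z (tr x y A) = tr x z A := by
  have hxy := hC.segment_subset hx hy
  have hyz := hC.segment_subset hy hz
  rw [tr_eq (hxy.trans hCS), tr_eq (hyz.trans hCS), trp_trp, ← Path.Homotopic.Quotient.mk_trans]
  apply trp_eq_tr hC hCS
  intro t
  rw [Path.trans_apply]
  split_ifs
  · exact hxy (segP_mem _ _ _ _)
  · exact hyz (segP_mem _ _ _ _)

lemma tr_self {b x : S} (A : Set (PQ b x)) : tr x x A = A := by
  have : segment ℝ (x : E) x ⊆ S := by simp
  rw [tr_eq this]
  have h : segP x x this = Path.refl x := by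
    ext t; simp [segP]
  rw [h]; exact trp_refl A

/-- locally flat section -/
def LocFlat {b : S} (W : Set E) (s : ∀ x : S, Set (PQ b x)) : Prop :=
  ∀ x : S, (x : E) ∈ W → ∀ᶠ y : S in 𝓝 x, tr x y (s x) = s y

lemma LocFlat.trp_eq_aux {b : S} (hS : IsOpen S) {W : Set E} {s : ∀ x : S, Set (PQ b x)}
    (hs : LocFlat W s) {x y : S} (γ : Path x y) (hγ : ∀ t, (γ t : E) ∈ W) :
    trp (Path.Homotopic.Quotient.mk (γ.subpath 0 1)) (s (γ 0)) = s (γ 1) := by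
  let P : I → Prop := fun t => trp (Path.Homotopic.Quotient.mk (γ.subpath 0 t)) (s (γ 0)) = s (γ t)
  have hP : IsLocallyConstant P := by
    rw [IsLocallyConstant.iff_eventually_eq]
    intro t₀
    obtain ⟨ε, hε, hball⟩ := Metric.isOpen_iff.1 hS (γ t₀) (γ t₀).2
    have h1 : ∀ᶠ z : S in 𝓝 (γ t₀), (z : E) ∈ Metric.ball (γ t₀ : E) ε :=
      continuous_subtype_val.continuousAt.preimage_mem_nhds (Metric.ball_mem_nhds _ hε)
    have h2 := (γ.continuous.continuousAt (x := t₀)).eventually (h1.and (hs _ (hγ t₀)))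
    obtain ⟨η, hη, h3⟩ := Metric.eventually_nhds_iff.1 h2
    refine Metric.eventually_nhds_iff.2 ⟨η, hη, fun t ht => ?_⟩
    have hin : ∀ u, ((γ.subpath t₀ t u : S) : E) ∈ Metric.ball (γ t₀ : E) ε := by
      intro u
      have : γ.subpath t₀ t u ∈ γ '' (Set.uIcc t₀ t) := by
        rw [← Path.range_subpath]; exact ⟨u, rfl⟩
      obtain ⟨v, hv, hv'⟩ := this
      rw [← hv']
      refine (h3 (lt_of_le_of_lt ?_ ht)).1
      rw [Subtype.dist_eq, Subtype.dist_eq, Real.dist_eq, Real.dist_eq]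
      have hv2 : (v : ℝ) ∈ Set.uIcc (t₀ : ℝ) t := by
        rcases Set.mem_uIcc.1 hv with h | h
        · exact Set.mem_uIcc.2 (Or.inl ⟨h.1, h.2⟩)
        · exact Set.mem_uIcc.2 (Or.inr ⟨h.1, h.2⟩)
      exact Set.abs_sub_left_of_mem_uIcc hv2
    have e1 : trp (Path.Homotopic.Quotient.mk (γ.subpath 0 t)) (s (γ 0)) =
        tr (γ t₀) (γ t) (trp (Path.Homotopic.Quotient.mk (γ.subpath 0 t₀)) (s (γ 0))) := by
      rw [← trp_eq_tr (convex_ball _ _) hball (γ.subpath t₀ t) hin, trp_trp,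
        ← Path.Homotopic.Quotient.mk_trans]
      congr 1
      rw [Path.Homotopic.Quotient.eq]
      exact ⟨(Path.Homotopy.subpathTransSubpath γ 0 t₀ t).symm⟩
    have e2 := (h3 ht).2
    have hseg : segment ℝ (γ t₀ : E) (γ t) ⊆ S :=
      ((convex_ball _ _).segment_subset (Metric.mem_ball_self hε) (h3 ht).1).trans hball
    simp only [P, eq_iff_iff]
    rw [e1, ← e2]
    exact (tr_inj hseg).eq_iff
  have h0 : P 0 := by
    simp only [P]
    rw [Path.subpath_self]; exact trp_refl _
  have : P 0 = P 1 := hP.apply_eq_of_preconnectedSpace 0 1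
  rw [this] at h0
  exact h0

lemma LocFlat.trp_eq {b : S} (hS : IsOpen S) {W : Set E} {s : ∀ x : S, Set (PQ b x)}
    (hs : LocFlat W s) {x y : S} (γ : Path x y) (hγ : ∀ t, (γ t : E) ∈ W) :
    trp (Path.Homotopic.Quotient.mk γ) (s x) = s y := by
  have h := hs.trp_eq_aux hS γ hγ
  have key : ∀ (x' y' : S) (hx : x' = x) (hy : y' = y),
      trp (Path.Homotopic.Quotient.mk (γ.cast hx hy)) (s x') = s y' →
      trp (Path.Homotopic.Quotient.mk γ) (s x) = s y := by
    rintro x' y' rfl rfl h; exact h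
  rw [Path.subpath_zero_one] at h
  exact key _ _ _ _ h

lemma LocFlat.tr_seg {b : S} (hS : IsOpen S) {W : Set E} (hW : W ⊆ S)
    {s : ∀ x : S, Set (PQ b x)} (hs : LocFlat W s) {x y : S}
    (h : segment ℝ (x : E) y ⊆ W) : tr x y (s x) = s y := by
  rw [tr_eq (h.trans hW)]
  exact hs.trp_eq hS _ fun t => h (segP_mem _ _ _ t)

lemma LocFlat.tr_conv {b : S} (hS : IsOpen S) {W : Set E} (hW : W ⊆ S)
    {s : ∀ x : S, Set (PQ b x)} (hs : LocFlat W s) {C : Set E} (hC : Convex ℝ C) (hCW : C ⊆ W)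
    {x y : S} (hx : (x : E) ∈ C) (hy : (y : E) ∈ C) : tr x y (s x) = s y :=
  hs.tr_seg hS hW ((hC.segment_subset hx hy).trans hCW)

lemma LocFlat.two_step {b : S} (hS : IsOpen S) {W : Set E} (hW : W ⊆ S)
    {s : ∀ x : S, Set (PQ b x)} (hs : LocFlat W s) {C : Set E} (hC : Convex ℝ C) (hCS : C ⊆ S)
    {x y z : S} (hx : (x : E) ∈ C) (hy : (y : E) ∈ C) (hz : (z : E) ∈ C)
    (h1 : segment ℝ (x : E) y ⊆ W) (h2 : segment ℝ (y : E) z ⊆ W) : tr x z (s x) = s z := by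
  rw [← tr_tr hC hCS hx hy hz, hs.tr_seg hS hW h1, hs.tr_seg hS hW h2]

open Classical in
theorem LocFlat.extend {b : S} {W : Set E} (hWo : IsOpen W)
    {s : ∀ x : S, Set (PQ b x)} (hs : LocFlat W s) {J : Type*} (C : J → Set E)
    (hCo : ∀ j, IsOpen (C j)) (hCc : ∀ j, Convex ℝ (C j)) (hCS : ∀ j, C j ⊆ S)
    (D : Set E) (hD : Dense D) (x0 : J → S) (hx0 : ∀ j, (x0 j : E) ∈ C j)
    (a : ∀ j, Set (PQ b (x0 j)))
    (h1 : ∀ j, ∀ y : S, (y : E) ∈ W → (y : E) ∈ C j → (y : E) ∈ D → tr (x0 j) y (a j) = s y)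
    (h2 : ∀ i j, i ≠ j → ∀ z ∈ C i, z ∈ C j → ∃ z' ∈ W, z' ∈ C i ∧ z' ∈ C j) :
    ∃ s' : ∀ x : S, Set (PQ b x), LocFlat (W ∪ ⋃ j, C j) s' ∧ (∀ x : S, (x : E) ∈ W → s' x = s x) ∧
      ∀ j, ∀ y : S, (y : E) ∈ C j → s' y = tr (x0 j) y (a j) := by
  have h1' : ∀ j, ∀ y : S, (y : E) ∈ W → (y : E) ∈ C j → tr (x0 j) y (a j) = s y := by
    intro j y hyW hyC
    have hev := hs y hyW
    rw [nhds_subtype_eq_comap, Filter.eventually_comap] at hev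
    have hev2 := (hev.and ((hWo.mem_nhds hyW))).and ((hCo j).mem_nhds hyC)
    obtain ⟨y', hy'D, ⟨hy'1, hy'W⟩, hy'C⟩ := hD.inter_nhds_nonempty hev2
    let Y : S := ⟨y', hCS j hy'C⟩
    have e1 := hy'1 Y rfl
    have e2 := h1 j Y hy'W hy'C hy'D
    have hseg : segment ℝ (y : E) (Y : E) ⊆ S :=
      ((hCc j).segment_subset hyC hy'C).trans (hCS j)
    apply tr_inj hseg
    rw [tr_tr (hCc j) (hCS j) (hx0 j) hyC (z := Y) hy'C, e1, e2]
  have h3 : ∀ i j, ∀ y : S, (y : E) ∈ C i → (y : E) ∈ C j →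
      tr (x0 i) y (a i) = tr (x0 j) y (a j) := by
    intro i j y hi hj
    by_cases hij : i = j
    · subst hij; rfl
    obtain ⟨z, hzW, hzi, hzj⟩ := h2 i j hij y hi hj
    let Z : S := ⟨z, hCS i hzi⟩
    rw [← tr_tr (hCc i) (hCS i) (hx0 i) (y := Z) hzi hi,
      ← tr_tr (hCc j) (hCS j) (hx0 j) (y := Z) hzj hj, h1' i Z hzW hzi, h1' j Z hzW hzj]
  let s' : ∀ x : S, Set (PQ b x) := fun y =>
    if (y : E) ∈ W then s y else
      if h : ∃ j, (y : E) ∈ C j then tr (x0 h.choose) y (a h.choose) else ∅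
  have hsW : ∀ x : S, (x : E) ∈ W → s' x = s x := by
    intro x hx; simp [s', hx]
  have hsC : ∀ j, ∀ y : S, (y : E) ∈ C j → s' y = tr (x0 j) y (a j) := by
    intro j y hy
    by_cases hW : (y : E) ∈ W
    · rw [hsW y hW, h1' j y hW hy]
    · have hex : ∃ j, (y : E) ∈ C j := ⟨j, hy⟩
      simp only [s', hW, hex, if_false, dif_pos]
      exact h3 _ _ y hex.choose_spec hy
  refine ⟨s', ?_, hsW, hsC⟩
  rintro x (hx | hx)
  · have : ∀ᶠ y : S in 𝓝 x, (y : E) ∈ W :=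
      continuous_subtype_val.continuousAt.preimage_mem_nhds (hWo.mem_nhds hx)
    filter_upwards [hs x hx, this] with y hy hyW
    rw [hsW x hx, hsW y hyW, hy]
  · obtain ⟨j, hj⟩ := Set.mem_iUnion.1 hx
    have : ∀ᶠ y : S in 𝓝 x, (y : E) ∈ C j :=
      continuous_subtype_val.continuousAt.preimage_mem_nhds ((hCo j).mem_nhds hj)
    filter_upwards [this] with y hy
    rw [hsC j x hj, hsC j y hy, tr_tr (hCc j) (hCS j) (hx0 j) hj hy]

end PartD

open scoped unitInterval Topology

/-- Real affine arrangement data in the chart, with auxiliary radii. -/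
structure Arr (ι : Type*) [Fintype ι] where
  α : ι → ℝ
  β : ι → ℝ
  Z : ℝ
  R : ℝ
  g : ι → ℝ
  inj : Function.Injective β
  hZ0 : 0 < Z
  hZ : ∀ k, |β k| < Z
  hR : 0 < R
  hRZ : ∀ k l, α k ≠ α l → 2 * Z < R * |α k - α l|
  hg1 : ∀ k, β k < g k
  hg2 : ∀ k, g k ≤ Z
  hg3 : ∀ k l, α l = α k → β k < β l → g k < β l
  hg4 : ∀ k, (∀ l, α l = α k → β l ≤ β k) → g k = Z

/-- a point of `ℂ × ℂ` from real and imaginary parts -/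
def pt (r1 r2 y1 y2 : ℝ) : ℂ × ℂ := (⟨r1, y1⟩, ⟨r2, y2⟩)

@[simp] lemma pt_re_one (r1 r2 y1 y2 : ℝ) : (pt r1 r2 y1 y2).1.re = r1 := rfl
@[simp] lemma pt_im_one (r1 r2 y1 y2 : ℝ) : (pt r1 r2 y1 y2).1.im = y1 := rfl
@[simp] lemma pt_re_two (r1 r2 y1 y2 : ℝ) : (pt r1 r2 y1 y2).2.re = r2 := rfl
@[simp] lemma pt_im_two (r1 r2 y1 y2 : ℝ) : (pt r1 r2 y1 y2).2.im = y2 := rfl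

/-- open convex -/
def OC (C : Set (ℂ × ℂ)) : Prop := IsOpen C ∧ Convex ℝ C

lemma OC.inter {C D : Set (ℂ × ℂ)} (h : OC C) (h' : OC D) : OC (C ∩ D) :=
  ⟨h.1.inter h'.1, h.2.inter h'.2⟩

lemma OC.forall {κ : Type*} [Finite κ] {P : κ → ℂ × ℂ → Prop} (h : ∀ k, OC {x | P k x}) :
    OC {x | ∀ k, P k x} := by
  rw [show {x | ∀ k, P k x} = ⋂ k, {x | P k x} by ext; simp]
  exact ⟨isOpen_iInter_of_finite fun k => (h k).1, convex_iInter fun k => (h k).2⟩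

lemma OC.imp {p : Prop} {P : ℂ × ℂ → Prop} (h : OC {x | P x}) : OC {x | p → P x} := by
  by_cases hp : p
  · simpa [hp] using h
  · simp only [hp, false_imp_iff]
    exact ⟨isOpen_univ, convex_univ⟩

lemma OC.and {P Q : ℂ × ℂ → Prop} (h : OC {x | P x}) (h' : OC {x | Q x}) :
    OC {x | P x ∧ Q x} := h.inter h'

lemma OC.aff (f : ℂ × ℂ → ℝ) (hf : Continuous f)
    (hl : ∀ x y : ℂ × ℂ, ∀ a b : ℝ, a + b = 1 → f (a • x + b • y) = a * f x + b * f y) :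
    OC {x | 0 < f x} := by
  refine ⟨isOpen_lt continuous_const hf, ?_⟩
  intro x hx y hy a b ha hb hab
  change 0 < f _
  rw [hl x y a b hab]
  change 0 < f x at hx
  change 0 < f y at hy
  rcases ha.eq_or_lt with rfl | ha
  · have : b = 1 := by linarith
    subst this; simpa using hy
  · have := mul_pos ha hx
    have := mul_nonneg hb hy.le
    linarith

lemma OC.im1 (c : ℝ) : OC {x : ℂ × ℂ | 0 < c * x.1.im} :=
  OC.aff _ (by fun_prop) (by intro x y a b _; simp; ring)

lemma sgn {a b c : ℝ} (h : 0 < a * c) (h' : 0 < b * c) : 0 < a * b := by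
  have h1 := mul_pos h h'
  have hc : c ≠ 0 := by rintro rfl; simp at h
  have : 0 < c * c := mul_self_pos.2 hc
  by_contra hn
  have := mul_nonneg (neg_nonneg.2 (not_lt.1 hn)) this.le
  nlinarith

namespace Arr
variable {ι : Type*} [Fintype ι] (A : Arr ι)

/-- real part of the `k`-th form -/
def rl (k : ι) (x : ℂ × ℂ) : ℝ := x.2.re - A.α k * x.1.re - A.β k
/-- imaginary part of the `k`-th form -/
def il (k : ι) (x : ℂ × ℂ) : ℝ := x.2.im - A.α k * x.1.im

@[simp] lemma rl_pt (k : ι) (r1 r2 y1 y2 : ℝ) :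
    A.rl k (pt r1 r2 y1 y2) = r2 - A.α k * r1 - A.β k := rfl
@[simp] lemma il_pt (k : ι) (r1 r2 y1 y2 : ℝ) :
    A.il k (pt r1 r2 y1 y2) = y2 - A.α k * y1 := rfl

lemma rl_cont (k : ι) : Continuous (A.rl k) := by unfold rl; fun_prop
lemma il_cont (k : ι) : Continuous (A.il k) := by unfold il; fun_prop
lemma rl_comb (k : ι) (x y : ℂ × ℂ) (a b : ℝ) (h : a + b = 1) :
    A.rl k (a • x + b • y) = a * A.rl k x + b * A.rl k y := by
  have : a = 1 - b := by linarith
  subst this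
  simp [rl]; ring
lemma il_comb (k : ι) (x y : ℂ × ℂ) (a b : ℝ) :
    A.il k (a • x + b • y) = a * A.il k x + b * A.il k y := by
  simp [il]; ring

lemma oc_rl (c : ℝ) (k : ι) : OC {x | 0 < c * A.rl k x} :=
  OC.aff _ (continuous_const.mul (A.rl_cont k))
    (by intro x y a b h; rw [A.rl_comb k x y a b h]; ring)
lemma oc_il (c : ℝ) (k : ι) : OC {x | 0 < c * A.il k x} :=
  OC.aff _ (continuous_const.mul (A.il_cont k))
    (by intro x y a b _; rw [A.il_comb k x y a b]; ring)

/-- complement of the arrangement -/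
def S : Set (ℂ × ℂ) := {x | ∀ k, A.rl k x ≠ 0 ∨ A.il k x ≠ 0}

lemma S_open : IsOpen A.S := by
  rw [show A.S = ⋂ k, {x | A.rl k x ≠ 0 ∨ A.il k x ≠ 0} by ext; simp [S]]
  refine isOpen_iInter_of_finite fun k => ?_
  exact (isOpen_ne_fun (A.rl_cont k) continuous_const).union
    (isOpen_ne_fun (A.il_cont k) continuous_const)

lemma ne_rl {c : ℝ} {k : ι} {x : ℂ × ℂ} (h : 0 < c * A.rl k x) : A.rl k x ≠ 0 ∨ A.il k x ≠ 0 := by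
  left; intro h0; simp [h0] at h
lemma ne_il {c : ℝ} {k : ι} {x : ℂ × ℂ} (h : 0 < c * A.il k x) : A.rl k x ≠ 0 ∨ A.il k x ≠ 0 := by
  right; intro h0; simp [h0] at h

/-! ### Pieces -/
/-- piece -/
def Ob (c : ι → ℝ) : Set (ℂ × ℂ) := {x | ∀ k, 0 < c k * A.rl k x}
/-- piece -/
def Eb (c : ι → ℝ) : Set (ℂ × ℂ) := {x | ∀ k, 0 < c k * A.il k x}
/-- real chamber of `(0,v)` -/
def O (v : ℝ) : Set (ℂ × ℂ) := A.Ob fun k => v - A.β k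
/-- piece -/
def Eu (h : ℝ) : Set (ℂ × ℂ) := A.Eb fun k => h - A.α k
/-- piece -/
def Up : Set (ℂ × ℂ) := {x | x ∈ A.S ∧ 0 < x.1.im}
/-- piece -/
def Dn : Set (ℂ × ℂ) := {x | x ∈ A.S ∧ x.1.im < 0}
/-- piece -/
def N (k : ι) (t : ℝ) : Set (ℂ × ℂ) := {x | 0 < (1 : ℝ) * x.1.im ∧ ∀ l,
  (A.α l ≠ A.α k → 0 < (A.α k - A.α l) * A.il l x) ∧
  (A.α l = A.α k → 0 < (t - A.β l) * A.rl l x)}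
/-- piece -/
def B (k : ι) (ε : ℝ) : Set (ℂ × ℂ) := {x | 0 < ε * A.il k x ∧ ∀ l,
  l ≠ k → 0 < (A.β k - A.β l) * A.rl l x}
/-- piece -/
def Em (h : ℝ) : Set (ℂ × ℂ) := {x | 0 < (-1 : ℝ) * x.1.im ∧ ∀ k, 0 < (A.α k - h) * A.il k x}
/-- piece -/
def Nm (k : ι) (t : ℝ) : Set (ℂ × ℂ) := {x | 0 < (-1 : ℝ) * x.1.im ∧ ∀ l,
  (A.α l ≠ A.α k → 0 < (A.α l - A.α k) * A.il l x) ∧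
  (A.α l = A.α k → 0 < (t - A.β l) * A.rl l x)}

lemma Ob_oc (c : ι → ℝ) : OC (A.Ob c) := OC.forall fun k => A.oc_rl _ k
lemma Eb_oc (c : ι → ℝ) : OC (A.Eb c) := OC.forall fun k => A.oc_il _ k
lemma O_oc (v : ℝ) : OC (A.O v) := A.Ob_oc _
lemma Eu_oc (v : ℝ) : OC (A.Eu v) := A.Eb_oc _
lemma N_oc (k : ι) (t : ℝ) : OC (A.N k t) :=
  (OC.im1 1).and (OC.forall fun l => (A.oc_il _ l).imp.and (A.oc_rl _ l).imp)
lemma B_oc (k : ι) (t : ℝ) : OC (A.B k t) :=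
  (A.oc_il _ k).and (OC.forall fun l => (A.oc_rl _ l).imp)
lemma Em_oc (h : ℝ) : OC (A.Em h) := (OC.im1 _).and (OC.forall fun l => (A.oc_il _ l))
lemma Nm_oc (k : ι) (t : ℝ) : OC (A.Nm k t) :=
  (OC.im1 _).and (OC.forall fun l => (A.oc_il _ l).imp.and (A.oc_rl _ l).imp)

lemma Ob_S (c : ι → ℝ) : A.Ob c ⊆ A.S := fun _ hx k => A.ne_rl (hx k)
lemma Eb_S (c : ι → ℝ) : A.Eb c ⊆ A.S := fun _ hx k => A.ne_il (hx k)
lemma O_S (v : ℝ) : A.O v ⊆ A.S := A.Ob_S _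
lemma Eu_S (v : ℝ) : A.Eu v ⊆ A.S := A.Eb_S _
lemma N_S (k : ι) (t : ℝ) : A.N k t ⊆ A.S := by
  intro x hx l
  by_cases h : A.α l = A.α k
  · exact A.ne_rl ((hx.2 l).2 h)
  · exact A.ne_il ((hx.2 l).1 h)
lemma Nm_S (k : ι) (t : ℝ) : A.Nm k t ⊆ A.S := by
  intro x hx l
  by_cases h : A.α l = A.α k
  · exact A.ne_rl ((hx.2 l).2 h)
  · exact A.ne_il ((hx.2 l).1 h)
lemma B_S (k : ι) (t : ℝ) : A.B k t ⊆ A.S := by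
  intro x hx l
  by_cases h : l = k
  · subst h; exact A.ne_il hx.1
  · exact A.ne_rl (hx.2 l h)
lemma Em_S (h : ℝ) : A.Em h ⊆ A.S := fun _ hx k => A.ne_il (hx.2 k)

lemma Up_open : IsOpen A.Up :=
  A.S_open.inter (isOpen_lt continuous_const (show Continuous fun x : ℂ × ℂ => x.1.im by fun_prop))
lemma Dn_open : IsOpen A.Dn :=
  A.S_open.inter (isOpen_lt (show Continuous fun x : ℂ × ℂ => x.1.im by fun_prop) continuous_const)

/-- dense set of generic imaginary part -/
def D : Set (ℂ × ℂ) := {x | x.1.im ≠ 0 ∧ ∀ k, A.il k x ≠ 0}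

lemma D_dense : Dense A.D := by
  have hc : ∀ (f : ℂ × ℂ → ℝ), (∃ v, ∀ x t, f (x + (t : ℝ) • v) = f x + t) → Continuous f →
      IsOpen {x | f x ≠ 0} ∧ Dense {x | f x ≠ 0} := by
    rintro f ⟨v, hv⟩ hf
    refine ⟨isOpen_ne_fun hf continuous_const, ?_⟩
    rw [dense_iff_closure_eq, Set.eq_univ_iff_forall]
    intro x
    by_cases hx : f x = 0
    · have ht : Filter.Tendsto (fun t : ℝ => x + t • v) (𝓝[≠] 0) (𝓝 x) := by
        have : Continuous fun t : ℝ => x + t • v := by fun_prop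
        have h := (this.tendsto 0).mono_left (nhdsWithin_le_nhds (s := {0}ᶜ))
        simpa using h
      refine mem_closure_of_tendsto ht ?_
      filter_upwards [self_mem_nhdsWithin] with t ht
      rw [hv, hx, zero_add]; exact ht
    · exact subset_closure hx
  have h1 := hc (fun x => x.1.im) ⟨(Complex.I, 0), by intro x t; simp⟩ (by fun_prop)
  have h2 : ∀ k, IsOpen {x | A.il k x ≠ 0} ∧ Dense {x | A.il k x ≠ 0} := fun k =>
    hc (A.il k) ⟨(0, Complex.I), by intro x t; simp [il]; ring⟩ (A.il_cont k)
  have h3 : Dense (⋂ k, {x | A.il k x ≠ 0}) := dense_iInter_of_isOpen (fun k => (h2 k).1) fun k => (h2 k).2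
  have : A.D = {x : ℂ × ℂ | x.1.im ≠ 0} ∩ ⋂ k, {x | A.il k x ≠ 0} := by
    ext; simp [D]
  rw [this]
  exact h1.2.inter_of_isOpen_left h3 h1.1

lemma exists_D {C : Set (ℂ × ℂ)} (hC : IsOpen C) {z : ℂ × ℂ} (hz : z ∈ C) : ∃ z' ∈ C, z' ∈ A.D := by
  obtain ⟨z', h1, h2⟩ := A.D_dense.inter_open_nonempty C hC ⟨z, hz⟩
  exact ⟨z', h1, h2⟩

/-- generic slopes -/
def Gen (h : ℝ) : Prop := ∀ k, h ≠ A.α k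

lemma D_up {x : ℂ × ℂ} (hx : x ∈ A.D) (h0 : 0 < x.1.im) : ∃ h, A.Gen h ∧ x ∈ A.Eu h := by
  have key : ∀ k, A.il k x = x.1.im * (x.2.im / x.1.im - A.α k) := by
    intro k; simp [il]; field_simp
  refine ⟨x.2.im / x.1.im, fun k hk => hx.2 k ?_, fun k => ?_⟩
  · rw [key, hk]; ring
  · have := hx.2 k
    rw [key] at this ⊢
    have h2 : (x.2.im / x.1.im - A.α k) ≠ 0 := fun h => this (by rw [h]; ring)
    have : 0 < (x.2.im / x.1.im - A.α k) ^ 2 := by positivity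
    nlinarith

lemma D_dn {x : ℂ × ℂ} (hx : x ∈ A.D) (h0 : x.1.im < 0) : ∃ h, A.Gen h ∧ x ∈ A.Em h := by
  have h0' : x.1.im ≠ 0 := h0.ne
  have key : ∀ k, A.il k x = x.1.im * (x.2.im / x.1.im - A.α k) := by
    intro k; simp [il]; field_simp
  refine ⟨x.2.im / x.1.im, fun k hk => hx.2 k ?_, by linarith, fun k => ?_⟩
  · rw [key, hk]; ring
  · have := hx.2 k
    rw [key] at this ⊢
    have h2 : (x.2.im / x.1.im - A.α k) ≠ 0 := fun h => this (by rw [h]; ring)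
    have : 0 < (x.2.im / x.1.im - A.α k) ^ 2 := by positivity
    nlinarith

lemma ZB (k : ι) : -A.Z - A.β k < 0 := by
  have := abs_lt.1 (A.hZ k); linarith [this.1]

lemma lam_O (h y1 : ℝ) : pt 0 (-A.Z) y1 h ∈ A.O (-A.Z) := by
  intro k
  have := A.ZB k
  simp; nlinarith

lemma pt_O {v : ℝ} (hv : ∀ k, v ≠ A.β k) (y1 y2 : ℝ) : pt 0 v y1 y2 ∈ A.O v := by
  intro k
  have : v - A.β k ≠ 0 := sub_ne_zero.2 (hv k)
  have : 0 < (v - A.β k) * (v - A.β k) := mul_self_pos.2 this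
  simpa using this

lemma negZ (k : ι) : -A.Z ≠ A.β k := by have := A.ZB k; intro h; linarith

/-- base point -/
def b : A.S := ⟨pt 0 (-A.Z) A.R 0, A.O_S _ (A.lam_O _ _)⟩

/-- existence of a flat section over `W` with value `H` at the base point -/
def Good (H : Set (PQ A.b A.b)) (W : Set (ℂ × ℂ)) : Prop :=
  ∃ s : ∀ x : A.S, Set (PQ A.b x), LocFlat W s ∧ s A.b = H

lemma Good.mono {A : Arr ι} {H : Set (PQ A.b A.b)} {W W' : Set (ℂ × ℂ)} (h : A.Good H W')
    (hW : W ⊆ W') : A.Good H W := by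
  obtain ⟨s, hs, hb⟩ := h
  exact ⟨s, fun x hx => hs x (hW hx), hb⟩

/-- extension where base points of the new pieces lie in `W` -/
theorem good_extend {H : Set (PQ A.b A.b)} {W : Set (ℂ × ℂ)} (hWo : IsOpen W)
    (hbW : (A.b : ℂ × ℂ) ∈ W)
    {s : ∀ x : A.S, Set (PQ A.b x)} (hs : LocFlat W s) (hsb : s A.b = H)
    {J : Type*} (C : J → Set (ℂ × ℂ))
    (hC : ∀ j, OC (C j)) (hCS : ∀ j, C j ⊆ A.S)
    (x0 : J → A.S) (hx0 : ∀ j, (x0 j : ℂ × ℂ) ∈ C j)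
    (a : ∀ j, Set (PQ A.b (x0 j)))
    (h1 : ∀ j, ∀ y : A.S, (y : ℂ × ℂ) ∈ W → (y : ℂ × ℂ) ∈ C j → (y : ℂ × ℂ) ∈ A.D →
      tr (x0 j) y (a j) = s y)
    (h2 : ∀ i j, i ≠ j → ∀ z ∈ C i, z ∈ C j → ∃ z' ∈ W, z' ∈ C i ∧ z' ∈ C j) :
    A.Good H (W ∪ ⋃ j, C j) := by
  obtain ⟨s', h, h', -⟩ := hs.extend hWo C (fun j => (hC j).1) (fun j => (hC j).2) hCS A.D A.D_dense
    x0 hx0 a h1 h2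
  exact ⟨s', h, by rw [h' _ hbW, hsb]⟩

/-! ### Stage 0 -/
/-- piece -/
def W0 : Set (ℂ × ℂ) := A.O (-A.Z)

lemma good0 (H : Set (PQ A.b A.b)) : A.Good H A.W0 := by
  obtain ⟨s', h, h', h''⟩ := LocFlat.extend (b := A.b) (W := ∅) isOpen_empty (s := fun _ => ∅)
    (fun x hx => hx.elim)
    (fun _ : Unit => A.W0) (fun _ => (A.O_oc _).1) (fun _ => (A.O_oc _).2) (fun _ => A.O_S _)
    A.D A.D_dense (fun _ => A.b) (fun _ => A.lam_O _ _) (fun _ => H)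
    (fun _ y hy => hy.elim) (fun i j h => (h rfl).elim)
  refine ⟨s', fun x hx => h x (Or.inr (Set.mem_iUnion.2 ⟨(), hx⟩)), ?_⟩
  rw [h'' () A.b (A.lam_O _ _), tr_self]

/-! ### Stage 1 -/
/-- piece -/
def W1 : Set (ℂ × ℂ) := A.W0 ∪ ⋃ h : {h : ℝ // A.Gen h}, A.Eu h

lemma W1_open : IsOpen A.W1 := (A.O_oc _).1.union (isOpen_iUnion fun _ => (A.Eu_oc _).1)
lemma W1_S : A.W1 ⊆ A.S := Set.union_subset (A.O_S _) (Set.iUnion_subset fun _ => A.Eu_S _)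
lemma Eu_W1 {h : ℝ} (hh : A.Gen h) : A.Eu h ⊆ A.W1 :=
  fun _ hx => Or.inr (Set.mem_iUnion.2 ⟨⟨h, hh⟩, hx⟩)

lemma pt_Eu {h : ℝ} (hh : A.Gen h) (r1 r2 : ℝ) : pt r1 r2 A.R (A.R * h) ∈ A.Eu h := by
  intro k
  have : h - A.α k ≠ 0 := sub_ne_zero.2 (hh k)
  have : 0 < A.R * (h - A.α k) ^ 2 := mul_pos A.hR (by positivity)
  simp; nlinarith

lemma good1 (H : Set (PQ A.b A.b)) : A.Good H A.W1 := by
  obtain ⟨s, hs, hb⟩ := A.good0 H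
  refine A.good_extend (A.O_oc _).1 (A.lam_O _ _) hs hb (fun h : {h : ℝ // A.Gen h} => A.Eu h)
    (fun _ => A.Eu_oc _) (fun _ => A.Eu_S _)
    (fun h => ⟨pt 0 (-A.Z) A.R (A.R * h), A.O_S _ (A.lam_O _ _)⟩)
    (fun h => A.pt_Eu h.2 _ _) (fun h => s _) ?_ ?_
  · intro h y hy _ _
    exact hs.tr_conv A.S_open (A.O_S _) (A.O_oc _).2 subset_rfl (A.lam_O _ _) hy
  · intro h h' _ z hz hz'
    refine ⟨pt 0 (-A.Z) A.R (A.R * h), A.lam_O _ _, A.pt_Eu h.2 _ _, fun k => ?_⟩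
    have := mul_pos A.hR (sgn (hz k) (hz' k))
    simp; nlinarith

end Arr

open scoped unitInterval Topology

lemma segP_val {E : Type*} [NormedAddCommGroup E] [NormedSpace ℝ E] {S : Set E} (x y : S)
    (h : segment ℝ (x : E) y ⊆ S) (t : I) :
    (segP x y h t : E) = (1 - (t : ℝ)) • (x : E) + (t : ℝ) • (y : E) :=
  AffineMap.lineMap_apply_module (x : E) (y : E) (t : ℝ)

namespace Arr
variable {ι : Type*} [Fintype ι] (A : Arr ι)

lemma two_conv {W : Set (ℂ × ℂ)} (hW : W ⊆ A.S)
    {s : ∀ x : A.S, Set (PQ A.b x)} (hs : LocFlat W s) {C C1 C2 : Set (ℂ × ℂ)} (hC : Convex ℝ C)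
    (hCS : C ⊆ A.S) (h1 : Convex ℝ C1) (hC1 : C1 ⊆ W) (h2 : Convex ℝ C2) (hC2 : C2 ⊆ W)
    (x z : A.S) (y : ℂ × ℂ) (hx : (x : ℂ × ℂ) ∈ C) (hy : y ∈ C) (hz : (z : ℂ × ℂ) ∈ C)
    (hx1 : (x : ℂ × ℂ) ∈ C1) (hy1 : y ∈ C1) (hy2 : y ∈ C2) (hz2 : (z : ℂ × ℂ) ∈ C2) :
    tr x z (s x) = s z :=
  hs.two_step A.S_open hW hC hCS (y := ⟨y, hCS hy⟩) hx hy hz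
    ((h1.segment_subset hx1 hy1).trans hC1) ((h2.segment_subset hy2 hz2).trans hC2)

/-- base points for stage 2 -/
def bk (k : ι) : A.S := ⟨pt 0 (-A.Z) A.R (A.R * A.α k), A.O_S _ (A.lam_O _ _)⟩

/-- stage 2a -/
def W2a : Set (ℂ × ℂ) := A.W1 ∪ ⋃ k : ι, A.N k (-A.Z)

lemma b_W0 : (A.b : ℂ × ℂ) ∈ A.W0 := A.lam_O _ _
lemma b_W1 : (A.b : ℂ × ℂ) ∈ A.W1 := Or.inl A.b_W0

lemma W2a_open : IsOpen A.W2a := A.W1_open.union (isOpen_iUnion fun _ => (A.N_oc _ _).1)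
lemma W2a_S : A.W2a ⊆ A.S := Set.union_subset A.W1_S (Set.iUnion_subset fun _ => A.N_S _ _)

lemma good2a (H : Set (PQ A.b A.b)) : A.Good H A.W2a := by
  obtain ⟨s, hs, hb⟩ := A.good1 H
  have hbk : ∀ k, (A.bk k : ℂ × ℂ) ∈ A.N k (-A.Z) := by
    intro k
    refine ⟨by simpa [bk] using A.hR, fun l => ⟨fun h => ?_, fun h => ?_⟩⟩
    · have h2 : 0 < (A.α k - A.α l) * (A.α k - A.α l) := mul_self_pos.2 (sub_ne_zero.2 (Ne.symm h))
      have := mul_pos A.hR h2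
      simp [bk]; nlinarith
    · exact A.lam_O _ _ l
  refine A.good_extend A.W1_open A.b_W1 hs hb (fun k : ι => A.N k (-A.Z))
    (fun _ => A.N_oc _ _) (fun _ => A.N_S _ _) (fun k => A.bk k) hbk (fun k => s _) ?_ ?_
  · intro k y hy hyN hyD
    have him : 0 < (y : ℂ × ℂ).1.im := by simpa using hyN.1
    obtain ⟨h, hh, hyE⟩ := A.D_up hyD him
    refine A.two_conv A.W1_S hs (A.N_oc _ _).2 (A.N_S _ _) (A.O_oc (-A.Z)).2 Set.subset_union_left
      (A.Eu_oc h).2 (A.Eu_W1 hh) (A.bk k) y (pt 0 (-A.Z) A.R (A.R * h)) (hbk k) ?_ hyN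
      (A.lam_O _ _) (A.lam_O _ _) (A.pt_Eu hh _ _) hyE
    refine ⟨by simpa using A.hR, fun l => ⟨fun h' => ?_, fun h => A.lam_O _ _ l⟩⟩
    have := mul_pos A.hR (sgn ((hyN.2 l).1 h') (hyE l))
    simp; nlinarith
  · intro k l _ z hz hz'
    obtain ⟨z', ⟨h1, h2⟩, hD⟩ := A.exists_D ((A.N_oc k _).1.inter (A.N_oc l _).1) ⟨hz, hz'⟩
    obtain ⟨h, hh, hE⟩ := A.D_up hD (by simpa using h1.1)
    exact ⟨z', A.Eu_W1 hh hE, h1, h2⟩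

lemma g_ne {k l : ι} (h : A.α l = A.α k) : A.g k - A.β l ≠ 0 := by
  rcases lt_or_ge (A.β k) (A.β l) with h' | h'
  · have := A.hg3 k l h h'; exact ne_of_lt (by linarith)
  · have := A.hg1 k; exact ne_of_gt (by linarith)

/-- centre of circle -/
noncomputable def cc (k : ι) : ℝ := (A.g k - A.Z) / 2
/-- radius of circle -/
noncomputable def rho (k : ι) : ℝ := (A.g k + A.Z) / 2

lemma rho_pos (k : ι) : 0 < A.rho k := by
  have := abs_lt.1 (A.hZ k); have := A.hg1 k; unfold rho; linarith
lemma rho_le (k : ι) : A.rho k ≤ A.Z := by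
  have := A.hg2 k; unfold rho; linarith

/-- half star slope -/
noncomputable def hs (k : ι) (ε : ℝ) : ℝ := A.α k + ε * A.Z / A.R

lemma sq_help {Z q r ε : ℝ} (hq : 0 < q) (hq' : q ≤ Z) (hr : 2 * Z < |r|) (hε : ε = 1 ∨ ε = -1) :
    0 < (r + ε * Z) * (r + ε * q) ∧ 0 < r * (r + ε * q):= by
  rcases hε with rfl | rfl <;> rcases le_total 0 r with h | h
  · rw [abs_of_nonneg h] at hr; constructor <;> apply mul_pos <;> linarith
  · rw [abs_of_nonpos h] at hr; constructor <;> apply mul_pos_of_neg_of_neg <;> linarith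
  · rw [abs_of_nonneg h] at hr; constructor <;> apply mul_pos <;> linarith
  · rw [abs_of_nonpos h] at hr; constructor <;> apply mul_pos_of_neg_of_neg <;> linarith

lemma hRZ' {k l : ι} (h : A.α k ≠ A.α l) : 2 * A.Z < |A.R * (A.α k - A.α l)| := by
  rw [abs_mul, abs_of_pos A.hR]; exact A.hRZ k l h

lemma hs_gen (k : ι) {ε : ℝ} (hε : ε = 1 ∨ ε = -1) : A.Gen (A.hs k ε) := by
  intro l hl
  have hR := A.hR
  have hZ := A.hZ0
  have e : A.R * (A.α k - A.α l) + ε * A.Z = 0 := by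
    unfold hs at hl; rw [← hl]; field_simp; ring
  by_cases h : A.α k = A.α l
  · rw [h] at e; rcases hε with rfl | rfl <;> linarith
  · have := (sq_help hZ le_rfl (A.hRZ' h) hε).1
    rw [e] at this; simp at this

lemma pt_HS (k : ι) {ε v q : ℝ} (hε : ε = 1 ∨ ε = -1) (hq : 0 < q) (hq' : q ≤ A.Z) :
    pt 0 v A.R (A.R * A.α k + ε * q) ∈ A.Eu (A.hs k ε) := by
  intro l
  have hR := A.hR
  have hZ := A.hZ0
  have e : (A.hs k ε - A.α l) * A.il l (pt 0 v A.R (A.R * A.α k + ε * q)) =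
      ((A.R * (A.α k - A.α l) + ε * A.Z) * (A.R * (A.α k - A.α l) + ε * q)) / A.R := by
    simp [hs]; field_simp; ring
  rw [e]
  refine div_pos ?_ hR
  by_cases h : A.α k = A.α l
  · rw [h]
    have : 0 < A.Z * q := mul_pos hZ hq
    rcases hε with rfl | rfl <;> simp <;> linarith
  · exact (sq_help hq hq' (A.hRZ' h) hε).1

lemma mu_mem (k : ι) : pt 0 (A.g k) A.R (A.R * A.α k) ∈ A.N k (A.g k) := by
  refine ⟨by simpa using A.hR, fun l => ⟨fun h => ?_, fun h => ?_⟩⟩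
  · have h2 : 0 < (A.α k - A.α l) * (A.α k - A.α l) := mul_self_pos.2 (sub_ne_zero.2 (Ne.symm h))
    have := mul_pos A.hR h2
    simp; nlinarith
  · simpa using A.g_ne h

/-- end of the half circles -/
def mu (k : ι) : A.S := ⟨pt 0 (A.g k) A.R (A.R * A.α k), A.N_S _ _ (A.mu_mem k)⟩

/-- half circle points -/
noncomputable def arcf (k : ι) (ε t : ℝ) : ℂ × ℂ :=
  pt 0 (A.cc k - A.rho k * Real.cos (Real.pi * t)) A.R
    (A.R * A.α k + ε * (A.rho k * Real.sin (Real.pi * t)))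

lemma arcf_zero (k : ι) (ε : ℝ) : A.arcf k ε 0 = A.bk k := by
  simp [arcf, bk, cc, rho]; ring_nf
lemma arcf_one (k : ι) (ε : ℝ) : A.arcf k ε 1 = A.mu k := by
  simp [arcf, mu, cc, rho]; ring_nf

lemma pt_cont {X : Type*} [TopologicalSpace X] {f1 f2 f3 f4 : X → ℝ} (h1 : Continuous f1)
    (h2 : Continuous f2) (h3 : Continuous f3) (h4 : Continuous f4) :
    Continuous fun x => pt (f1 x) (f2 x) (f3 x) (f4 x) := by
  have : ∀ a b : ℝ, (⟨a, b⟩ : ℂ) = a + b * Complex.I := fun a b => Complex.mk_eq_add_mul_I a b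
  simp only [pt, this]
  fun_prop

lemma arcf_HS (k : ι) {ε t : ℝ} (hε : ε = 1 ∨ ε = -1) (h0 : 0 < t) (h1 : t < 1) :
    A.arcf k ε t ∈ A.Eu (A.hs k ε) := by
  refine A.pt_HS k hε (mul_pos (A.rho_pos k) (Real.sin_pos_of_pos_of_lt_pi ?_ ?_)) ?_
  · positivity
  · nlinarith [Real.pi_pos]
  · have := Real.sin_le_one (Real.pi * t)
    nlinarith [A.rho_pos k, A.rho_le k]

lemma arcf_S (k : ι) {ε : ℝ} (hε : ε = 1 ∨ ε = -1) (t : I) : A.arcf k ε t ∈ A.S := by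
  rcases eq_or_ne t 0 with rfl | h0
  · rw [Set.Icc.coe_zero, arcf_zero]; exact (A.bk k).2
  rcases eq_or_ne t 1 with rfl | h1
  · rw [Set.Icc.coe_one, arcf_one]; exact (A.mu k).2
  exact A.Eu_S _ (A.arcf_HS k hε (unitInterval.pos_iff_ne_zero.2 h0) (unitInterval.lt_one_iff_ne_one.2 h1))

/-- half circle path -/
noncomputable def arc (k : ι) (ε : ℝ) (hε : ε = 1 ∨ ε = -1) : Path (A.bk k) (A.mu k) where
  toFun t := ⟨A.arcf k ε t, A.arcf_S k hε t⟩
  continuous_toFun := by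
    refine Continuous.subtype_mk ?_ _
    unfold arcf
    apply pt_cont <;> fun_prop
  source' := Subtype.ext ((congrArg (A.arcf k ε) Set.Icc.coe_zero).trans (A.arcf_zero k ε))
  target' := Subtype.ext ((congrArg (A.arcf k ε) Set.Icc.coe_one).trans (A.arcf_one k ε))

lemma mm_HS (k : ι) {ε : ℝ} (hε : ε = 1 ∨ ε = -1) :
    pt 0 (A.cc k) A.R (A.R * A.α k + ε * A.rho k) ∈ A.Eu (A.hs k ε) :=
  A.pt_HS k hε (A.rho_pos k) (A.rho_le k)

/-- top of the half circle -/
noncomputable def mm (k : ι) (ε : ℝ) (hε : ε = 1 ∨ ε = -1) : A.S :=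
  ⟨pt 0 (A.cc k) A.R (A.R * A.α k + ε * A.rho k), A.Eu_S _ (A.mm_HS k hε)⟩

lemma bm_seg (k : ι) {ε : ℝ} (hε : ε = 1 ∨ ε = -1) {t : ℝ} (h0 : 0 < t) (h1 : t ≤ 1) :
    (1 - t) • (A.bk k : ℂ × ℂ) + t • (A.mm k ε hε : ℂ × ℂ) ∈ A.Eu (A.hs k ε) := by
  have : (1 - t) • (A.bk k : ℂ × ℂ) + t • (A.mm k ε hε : ℂ × ℂ) =
      pt 0 ((1 - t) * (-A.Z) + t * A.cc k) A.R (A.R * A.α k + ε * (t * A.rho k)) := by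
    simp only [bk, mm, pt]
    refine Prod.ext (Complex.ext ?_ ?_) (Complex.ext ?_ ?_) <;> simp <;> ring
  rw [this]
  exact A.pt_HS k hε (mul_pos h0 (A.rho_pos k)) (by nlinarith [A.rho_pos k, A.rho_le k])

lemma mmu_seg (k : ι) {ε : ℝ} (hε : ε = 1 ∨ ε = -1) {t : ℝ} (h0 : 0 ≤ t) (h1 : t < 1) :
    (1 - t) • (A.mm k ε hε : ℂ × ℂ) + t • (A.mu k : ℂ × ℂ) ∈ A.Eu (A.hs k ε) := by
  have : (1 - t) • (A.mm k ε hε : ℂ × ℂ) + t • (A.mu k : ℂ × ℂ) =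
      pt 0 ((1 - t) * (A.cc k) + t * A.g k) A.R (A.R * A.α k + ε * ((1 - t) * A.rho k)) := by
    simp only [mu, mm, pt]
    refine Prod.ext (Complex.ext ?_ ?_) (Complex.ext ?_ ?_) <;> simp <;> ring
  rw [this]
  exact A.pt_HS k hε (mul_pos (by linarith) (A.rho_pos k)) (by nlinarith [A.rho_pos k, A.rho_le k])

lemma bm_sub (k : ι) {ε : ℝ} (hε : ε = 1 ∨ ε = -1) :
    segment ℝ (A.bk k : ℂ × ℂ) (A.mm k ε hε) ⊆ A.W1 := by
  rintro x ⟨a, t, ha, ht, hat, rfl⟩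
  obtain rfl : a = 1 - t := by linarith
  rcases ht.eq_or_lt with rfl | ht
  · rw [sub_zero, one_smul, zero_smul, add_zero]; exact Or.inl (A.lam_O _ _)
  · exact A.Eu_W1 (A.hs_gen k hε) (A.bm_seg k hε ht (by linarith))

lemma mmu_sub (k : ι) {ε : ℝ} (hε : ε = 1 ∨ ε = -1) :
    segment ℝ (A.mm k ε hε : ℂ × ℂ) (A.mu k) ⊆ A.S := by
  rintro x ⟨a, t, ha, ht, hat, rfl⟩
  obtain rfl : a = 1 - t := by linarith
  rcases ha.eq_or_lt with h | h
  · obtain rfl : t = 1 := by linarith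
    simp
  · exact A.Eu_S _ (A.mmu_seg k hε ht (by linarith))

lemma trp_arc {s : ∀ x : A.S, Set (PQ A.b x)} (hs : LocFlat A.W1 s) (k : ι) {ε : ℝ}
    (hε : ε = 1 ∨ ε = -1) :
    trp (Path.Homotopic.Quotient.mk (A.arc k ε hε)) (s (A.bk k)) =
      tr (A.mm k ε hε) (A.mu k) (s (A.mm k ε hε)) := by
  have e : Path.Homotopic.Quotient.mk (A.arc k ε hε) = Path.Homotopic.Quotient.mk
      ((segP (A.bk k) (A.mm k ε hε) ((A.bm_sub k hε).trans A.W1_S)).trans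
        (segP (A.mm k ε hε) (A.mu k) (A.mmu_sub k hε))) := by
    rw [Path.Homotopic.Quotient.eq]
    apply homotopic_of_segment
    intro t
    rcases eq_or_ne t 0 with rfl | h0
    · rw [Path.source, Path.source]; simp
    rcases eq_or_ne t 1 with rfl | h1
    · rw [Path.target, Path.target]; simp
    have h0' : 0 < (t : ℝ) := unitInterval.pos_iff_ne_zero.2 h0
    have h1' : (t : ℝ) < 1 := unitInterval.lt_one_iff_ne_one.2 h1
    refine ((A.Eu_oc (A.hs k ε)).2.segment_subset (A.arcf_HS k hε h0' h1') ?_).trans (A.Eu_S _)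
    rw [Path.trans_apply]
    split_ifs with h
    · rw [segP_val]
      exact A.bm_seg k hε (mul_pos two_pos h0') (by change 2 * (t : ℝ) ≤ 1; linarith)
    · rw [segP_val]
      exact A.mmu_seg k hε (by change 0 ≤ 2 * (t : ℝ) - 1; linarith)
        (by change 2 * (t : ℝ) - 1 < 1; linarith)
  rw [e, Path.Homotopic.Quotient.mk_trans, ← trp_trp, ← tr_eq, ← tr_eq,
    hs.tr_seg A.S_open A.W1_S (A.bm_sub k hε)]

/-- lexicographic star -/
def LX (k : ι) (ε : ℝ) : Set (ℂ × ℂ) := {x | ∀ l,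
  (A.α l ≠ A.α k → 0 < (A.α k - A.α l) * A.il l x) ∧
  (A.α l = A.α k → 0 < ε * A.il l x ∨ (ε * A.il l x = 0 ∧ 0 < (A.g k - A.β l) * A.rl l x))}

lemma LX_S (k : ι) (ε : ℝ) : A.LX k ε ⊆ A.S := by
  intro x hx l
  by_cases h : A.α l = A.α k
  · rcases (hx l).2 h with h | h
    · exact A.ne_il h
    · exact A.ne_rl h.2
  · exact A.ne_il ((hx l).1 h)

lemma LX_conv (k : ι) (ε : ℝ) : Convex ℝ (A.LX k ε) := by
  intro x hx y hy a b ha hb hab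
  rcases ha.eq_or_lt with rfl | ha
  · obtain rfl : b = 1 := by linarith
    simpa using hy
  rcases hb.eq_or_lt with rfl | hb
  · obtain rfl : a = 1 := by linarith
    simpa using hx
  intro l
  rw [A.il_comb, A.rl_comb _ _ _ _ _ hab]
  refine ⟨fun h => ?_, fun h => ?_⟩
  · have h1 := mul_pos ha ((hx l).1 h)
    have h2 := mul_pos hb ((hy l).1 h)
    nlinarith
  · rcases (hx l).2 h with h1 | ⟨h1, h1'⟩ <;> rcases (hy l).2 h with h2 | ⟨h2, h2'⟩
    · left; have := mul_pos ha h1; have := mul_pos hb h2; nlinarith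
    · left; have := mul_pos ha h1; have : b * (ε * A.il l y) = 0 := by rw [h2, mul_zero]
      nlinarith
    · left; have := mul_pos hb h2; have : a * (ε * A.il l x) = 0 := by rw [h1, mul_zero]
      nlinarith
    · right
      constructor
      · linear_combination a * h1 + b * h2
      · have := mul_pos ha h1'; have := mul_pos hb h2'; nlinarith

lemma good2b (H : Set (PQ A.b A.b))
    (hY : ∀ k, trp (Path.Homotopic.Quotient.mk (A.arc k (-1) (Or.inr rfl))) (tr A.b (A.bk k) H) =
      trp (Path.Homotopic.Quotient.mk (A.arc k 1 (Or.inl rfl))) (tr A.b (A.bk k) H)) :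
    A.Good H (A.W2a ∪ ⋃ k : ι, A.N k (A.g k)) := by
  obtain ⟨s, hs, hb⟩ := A.good2a H
  have hs1 : LocFlat A.W1 s := fun x hx => hs x (Or.inl hx)
  have hV : ∀ k, tr A.b (A.bk k) H = s (A.bk k) := by
    intro k; rw [← hb]
    exact hs1.tr_conv A.S_open A.W1_S (A.O_oc (-A.Z)).2 Set.subset_union_left A.b_W0 (A.lam_O _ _)
  simp only [hV, A.trp_arc hs1] at hY
  refine A.good_extend A.W2a_open (Or.inl A.b_W1) hs hb (fun k : ι => A.N k (A.g k))
    (fun _ => A.N_oc _ _) (fun _ => A.N_S _ _) (fun k => A.mu k) A.mu_mem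
    (fun k => tr (A.mm k 1 (Or.inl rfl)) (A.mu k) (s (A.mm k 1 (Or.inl rfl)))) ?_ ?_
  · intro k y hy hyN hyD
    have him : 0 < (y : ℂ × ℂ).1.im := by simpa using hyN.1
    obtain ⟨h, hh, hyE⟩ := A.D_up hyD him
    obtain ⟨ε, hε, hsg⟩ : ∃ ε : ℝ, (ε = 1 ∨ ε = -1) ∧ 0 < ε * (h - A.α k) := by
      rcases lt_or_gt_of_ne (hh k) with h' | h'
      · exact ⟨-1, Or.inr rfl, by linarith⟩
      · exact ⟨1, Or.inl rfl, by linarith⟩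
    have ea : tr (A.mm k 1 (Or.inl rfl)) (A.mu k) (s (A.mm k 1 (Or.inl rfl))) =
        tr (A.mm k ε hε) (A.mu k) (s (A.mm k ε hε)) := by
      rcases hε with rfl | rfl
      · rfl
      · exact (hY k).symm
    have hother : ∀ l, A.α l ≠ A.α k →
        0 < (A.α k - A.α l) * (A.R * (A.α k - A.α l) + ε * A.rho k) := by
      intro l hl
      have := (sq_help (A.rho_pos k) (A.rho_le k) (A.hRZ' (Ne.symm hl)) hε).2
      have hR := A.hR
      rw [mul_assoc] at this
      exact (mul_pos_iff_of_pos_left hR).1 this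
    have hmE : (A.mm k ε hε : ℂ × ℂ) ∈ A.Eu h := by
      intro l
      by_cases hl : A.α l = A.α k
      · have := mul_pos hsg (A.rho_pos k)
        simp [mm, hl]; nlinarith
      · have h1 := sgn ((hyN.2 l).1 hl) (hyE l)
        have h2 := hother l hl
        have h3 := sgn (a := h - A.α l) (c := A.α k - A.α l)
          (b := A.R * (A.α k - A.α l) + ε * A.rho k) (by linarith) (by linarith)
        simp [mm]; nlinarith
    have e1 : tr (A.mm k ε hε) y (s (A.mm k ε hε)) = s y :=
      hs1.tr_conv A.S_open A.W1_S (A.Eu_oc h).2 (A.Eu_W1 hh) hmE hyE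
    rw [ea, tr_tr (A.LX_conv k ε) (A.LX_S k ε) ?_ ?_ ?_, e1]
    · refine fun l => ⟨fun hl => ?_, fun hl => ?_⟩
      · have := hother l hl
        simp [mm]; nlinarith
      · left; simp [mm, hl]
        have := A.rho_pos k
        rcases hε with rfl | rfl <;> linarith
    · refine fun l => ⟨fun hl => ((A.mu_mem k).2 l).1 hl, fun hl => Or.inr ⟨?_, ((A.mu_mem k).2 l).2 hl⟩⟩
      simp [mu, hl]; right; ring
    · refine fun l => ⟨fun hl => (hyN.2 l).1 hl, fun hl => Or.inl ?_⟩
      have := hyE l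
      simp only [hl] at this
      exact sgn hsg (by linarith)
  · intro k l _ z hz hz'
    obtain ⟨z', ⟨h1, h2⟩, hD⟩ := A.exists_D ((A.N_oc k _).1.inter (A.N_oc l _).1) ⟨hz, hz'⟩
    obtain ⟨h, hh, hE⟩ := A.D_up hD (by simpa using h1.1)
    exact ⟨z', Or.inl (A.Eu_W1 hh hE), h1, h2⟩

lemma Up_cover : A.Up ⊆ A.W2a ∪ ⋃ k : ι, A.N k (A.g k) := by
  rintro x ⟨hxS, him⟩
  by_cases hD : ∀ k, A.il k x ≠ 0
  · obtain ⟨h, hh, hE⟩ := A.D_up (x := x) ⟨him.ne', hD⟩ him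
    exact Or.inl (Or.inl (A.Eu_W1 hh hE))
  push Not at hD
  obtain ⟨k, hk⟩ := hD
  set t := x.2.re - A.α k * x.1.re with ht
  have hoth : ∀ l, A.α l ≠ A.α k → 0 < (A.α k - A.α l) * A.il l x := by
    intro l hl
    have h2 : 0 < (A.α k - A.α l) * (A.α k - A.α l) := mul_self_pos.2 (sub_ne_zero.2 (Ne.symm hl))
    have := mul_pos him h2
    have e : A.il l x = (A.α k - A.α l) * x.1.im := by
      unfold il at hk ⊢; linear_combination hk
    rw [e]; linarith
  have hrl : ∀ l, A.α l = A.α k → A.rl l x = t - A.β l := by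
    intro l hl; simp [rl, ht, hl]
  have hne : ∀ l, A.α l = A.α k → t - A.β l ≠ 0 := by
    intro l hl
    rcases hxS l with h | h
    · rwa [← hrl l hl]
    · exfalso; apply h; unfold il at hk ⊢; rw [hl]; exact hk
  by_cases hall : ∀ l, A.α l = A.α k → t < A.β l
  · refine Or.inl (Or.inr (Set.mem_iUnion.2 ⟨k, by linarith, fun l => ⟨hoth l, fun hl => ?_⟩⟩))
    rw [hrl l hl]
    exact mul_pos_of_neg_of_neg (A.ZB l) (by linarith [hall l hl])
  · push Not at hall
    classical
    obtain ⟨l0, hl0, hl0'⟩ := hall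
    obtain ⟨k', hk', hmax⟩ := Finset.exists_max_image
      (Finset.univ.filter fun l => A.α l = A.α k ∧ A.β l < t) A.β
      ⟨l0, by simpa using ⟨hl0, lt_of_le_of_ne hl0' fun h => hne l0 hl0 (by rw [h, sub_self])⟩⟩
    simp only [Finset.mem_filter, Finset.mem_univ, true_and] at hk' hmax
    refine Or.inr (Set.mem_iUnion.2 ⟨k', by linarith, fun l => ⟨fun h => ?_, fun h => ?_⟩⟩)
    · rw [hk'.1] at h ⊢; exact hoth l h
    · rw [hk'.1] at h
      rw [hrl l h]
      rcases lt_or_gt_of_ne (hne l h) with h1 | h1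
      · exact mul_pos_of_neg_of_neg (by linarith [A.hg3 k' l (h.trans hk'.1.symm) (by linarith)]) h1
      · exact mul_pos (by linarith [A.hg1 k', hmax l ⟨h, by linarith⟩]) h1

end Arr

open scoped unitInterval Topology

namespace Arr
variable {ι : Type*} [Fintype ι] (A : Arr ι)

/-- the upper half space -/
def Ui : Set (ℂ × ℂ) := {x | 0 < (1 : ℝ) * x.1.im}
/-- the lower half space -/
def Di : Set (ℂ × ℂ) := {x | 0 < (-1 : ℝ) * x.1.im}
lemma Ui_oc : OC Ui := OC.im1 1
lemma Di_oc : OC Di := OC.im1 (-1)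

lemma Ui_sub {C : Set (ℂ × ℂ)} (hC : C ⊆ A.S) : C ∩ Ui ⊆ A.Up :=
  fun x hx => ⟨hC hx.1, by have : 0 < (1 : ℝ) * x.1.im := hx.2; linarith⟩
lemma Di_sub {C : Set (ℂ × ℂ)} (hC : C ⊆ A.S) : C ∩ Di ⊆ A.Dn :=
  fun x hx => ⟨hC hx.1, by have : 0 < (-1 : ℝ) * x.1.im := hx.2; linarith⟩
lemma pt_Ui (r1 r2 y : ℝ) : pt r1 r2 A.R y ∈ Ui := by
  change 0 < (1 : ℝ) * A.R; linarith [A.hR]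
lemma pt_Di (r1 r2 y : ℝ) : pt r1 r2 (-A.R) y ∈ Di := by
  change 0 < (-1 : ℝ) * (-A.R); linarith [A.hR]
lemma Up_Ui {x : ℂ × ℂ} (h : x ∈ A.Up) : x ∈ Ui := by
  change 0 < (1 : ℝ) * x.1.im; linarith [h.2]
lemma Dn_Di {x : ℂ × ℂ} (h : x ∈ A.Dn) : x ∈ Di := by
  change 0 < (-1 : ℝ) * x.1.im; linarith [h.2]

lemma Ob_of {c c' : ι → ℝ} (h : ∀ k, 0 < c' k * c k) : A.Ob c ⊆ A.Ob c' := by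
  intro x hx k
  have h1 := hx k
  exact sgn (h k) (by linarith)

/-- generic values -/
def GenV (v : ℝ) : Prop := ∀ k, v ≠ A.β k

/-- stage 2 -/
def W2 : Set (ℂ × ℂ) := A.W1 ∪ A.Up
lemma W2_open : IsOpen A.W2 := A.W1_open.union A.Up_open
lemma W2_S : A.W2 ⊆ A.S := Set.union_subset A.W1_S fun _ h => h.1
lemma b_W2 : (A.b : ℂ × ℂ) ∈ A.W2 := Or.inl A.b_W1
lemma Eu_W2 {h : ℝ} (hh : A.Gen h) : A.Eu h ⊆ A.W2 := fun _ hx => Or.inl (A.Eu_W1 hh hx)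

/-- stage 3 -/
def W3 : Set (ℂ × ℂ) := A.W2 ∪ ⋃ v : {v : ℝ // A.GenV v}, A.O v
lemma W3_open : IsOpen A.W3 := A.W2_open.union (isOpen_iUnion fun _ => (A.O_oc _).1)
lemma W3_S : A.W3 ⊆ A.S := Set.union_subset A.W2_S (Set.iUnion_subset fun _ => A.O_S _)
lemma Eu_W3 {h : ℝ} (hh : A.Gen h) : A.Eu h ⊆ A.W3 := fun _ hx => Or.inl (A.Eu_W2 hh hx)
lemma Up_W3 : A.Up ⊆ A.W3 := fun _ hx => Or.inl (Or.inr hx)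
lemma O_W3 {v : ℝ} (hv : A.GenV v) : A.O v ⊆ A.W3 := fun _ hx => Or.inr (Set.mem_iUnion.2 ⟨⟨v, hv⟩, hx⟩)

lemma W3_cases {x : ℂ × ℂ} (hx : x ∈ A.W3) :
    (∃ h, A.Gen h ∧ x ∈ A.Eu h) ∨ x ∈ A.Up ∨ ∃ v, A.GenV v ∧ x ∈ A.O v := by
  rcases hx with ((hx | hx) | hx) | hx
  · exact Or.inr (Or.inr ⟨-A.Z, A.negZ, hx⟩)
  · obtain ⟨h, hx⟩ := Set.mem_iUnion.1 hx
    exact Or.inl ⟨h, h.2, hx⟩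
  · exact Or.inr (Or.inl hx)
  · obtain ⟨h, hx⟩ := Set.mem_iUnion.1 hx
    exact Or.inr (Or.inr ⟨h, h.2, hx⟩)

lemma good3 {H : Set (PQ A.b A.b)} (hg : A.Good H A.W2) : A.Good H A.W3 := by
  obtain ⟨s, hs, hb⟩ := hg
  refine A.good_extend A.W2_open A.b_W2 hs hb (fun v : {v : ℝ // A.GenV v} => A.O v)
    (fun _ => A.O_oc _) (fun _ => A.O_S _)
    (fun v => ⟨pt 0 v A.R 0, A.O_S _ (A.pt_O v.2 _ _)⟩)
    (fun v => A.pt_O v.2 _ _) (fun v => s _) ?_ ?_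
  · rintro ⟨v, hv⟩ y hy hyO hyD
    have hUO : A.O v ∩ Ui ⊆ A.W2 := (A.Ui_sub (A.O_S _)).trans Set.subset_union_right
    have hUc : Convex ℝ (A.O v ∩ Ui) := (A.O_oc _).2.inter Ui_oc.2
    rcases hy with (hy | hy) | hy
    · refine hs.tr_conv A.S_open A.W2_S (A.O_oc (-A.Z)).2
        (fun _ h => Or.inl (Or.inl h)) ?_ hy
      exact A.Ob_of (fun k => sgn (hy k) (hyO k)) (A.pt_O hv _ _)
    · obtain ⟨⟨h, hh⟩, hy⟩ := Set.mem_iUnion.1 hy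
      exact A.two_conv A.W2_S hs (A.O_oc v).2 (A.O_S v) hUc hUO (A.Eu_oc h).2 (A.Eu_W2 hh)
        _ y (pt 0 v A.R (A.R * h)) (A.pt_O hv _ _) (A.pt_O hv _ _) hyO
        ⟨A.pt_O hv _ _, A.pt_Ui _ _ _⟩ ⟨A.pt_O hv _ _, A.pt_Ui _ _ _⟩ (A.pt_Eu hh _ _) hy
    · exact hs.tr_conv A.S_open A.W2_S hUc hUO ⟨A.pt_O hv _ _, A.pt_Ui _ _ _⟩ ⟨hyO, A.Up_Ui hy⟩
  · rintro ⟨v, hv⟩ ⟨v', hv'⟩ _ z hz hz'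
    exact ⟨pt 0 v A.R 0, Or.inr (A.Ui_sub (A.O_S v) ⟨A.pt_O hv _ _, A.pt_Ui _ _ _⟩),
      A.pt_O hv _ _, A.Ob_of (fun k => sgn (hz' k) (hz k)) (A.pt_O hv _ _)⟩

/-- signs -/
abbrev Sg := {ε : ℝ // ε = 1 ∨ ε = -1}

lemma Sg.sq (ε : Sg) : (ε : ℝ) * ε = 1 := by
  rcases ε with ⟨ε, rfl | rfl⟩ <;> simp

lemma exists_Sg {r : ℝ} (h : r ≠ 0) : ∃ ε : Sg, 0 < (ε : ℝ) * r := by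
  rcases lt_or_gt_of_ne h with h | h
  · exact ⟨⟨-1, Or.inr rfl⟩, by simpa using h⟩
  · exact ⟨⟨1, Or.inl rfl⟩, by simpa using h⟩

lemma pt_B (k : ι) {ε y1 y2 : ℝ} (h : 0 < ε * (y2 - A.α k * y1)) : pt 0 (A.β k) y1 y2 ∈ A.B k ε := by
  refine ⟨h, fun l hl => ?_⟩
  have : A.β k - A.β l ≠ 0 := sub_ne_zero.2 fun h => hl (A.inj h.symm)
  have := mul_self_pos.2 this
  simpa using this

/-- stage 4 -/
def W4 : Set (ℂ × ℂ) := A.W3 ∪ ⋃ p : ι × Sg, A.B p.1 p.2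
lemma W4_open : IsOpen A.W4 := A.W3_open.union (isOpen_iUnion fun _ => (A.B_oc _ _).1)
lemma W4_S : A.W4 ⊆ A.S := Set.union_subset A.W3_S (Set.iUnion_subset fun _ => A.B_S _ _)
lemma b_W3 : (A.b : ℂ × ℂ) ∈ A.W3 := Or.inl A.b_W2
lemma b_W4 : (A.b : ℂ × ℂ) ∈ A.W4 := Or.inl A.b_W3
lemma B_W4 (k : ι) (ε : Sg) : A.B k ε ⊆ A.W4 := fun _ hx => Or.inr (Set.mem_iUnion.2 ⟨(k, ε), hx⟩)
lemma O_W4 {v : ℝ} (hv : A.GenV v) : A.O v ⊆ A.W4 := fun _ hx => Or.inl (A.O_W3 hv hx)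

lemma good4 {H : Set (PQ A.b A.b)} (hg : A.Good H A.W3) : A.Good H A.W4 := by
  obtain ⟨s, hs, hb⟩ := hg
  have hx0 : ∀ p : ι × Sg, pt 0 (A.β p.1) A.R (A.R * A.α p.1 + p.2) ∈ A.B p.1 p.2 := by
    rintro ⟨k, ε⟩
    apply A.pt_B
    have := ε.sq
    ring_nf; ring_nf at this; rw [this]; exact one_pos
  refine A.good_extend A.W3_open A.b_W3 hs hb (fun p : ι × Sg => A.B p.1 p.2)
    (fun _ => A.B_oc _ _) (fun _ => A.B_S _ _)
    (fun p => ⟨_, A.B_S _ _ (hx0 p)⟩) hx0 (fun v => s _) ?_ ?_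
  · rintro ⟨k, ε⟩ y hy hyB hyD
    have hUO : A.B k ε ∩ Ui ⊆ A.W3 := (A.Ui_sub (A.B_S _ _)).trans A.Up_W3
    have hUc : Convex ℝ (A.B k ε ∩ Ui) := (A.B_oc _ _).2.inter Ui_oc.2
    rcases A.W3_cases hy with ⟨h, hh, hy⟩ | hy | ⟨v, hv, hy⟩
    · have : pt 0 (A.β k) A.R (A.R * h) ∈ A.B k ε := by
        apply A.pt_B
        have := mul_pos A.hR (sgn hyB.1 (hy k))
        nlinarith
      exact A.two_conv A.W3_S hs (A.B_oc k ε).2 (A.B_S k ε) hUc hUO (A.Eu_oc h).2 (A.Eu_W3 hh)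
        _ y (pt 0 (A.β k) A.R (A.R * h)) (hx0 (k, ε)) this hyB
        ⟨hx0 (k, ε), A.pt_Ui _ _ _⟩ ⟨this, A.pt_Ui _ _ _⟩ (A.pt_Eu hh _ _) hy
    · exact hs.tr_conv A.S_open A.W3_S hUc hUO ⟨hx0 (k, ε), A.pt_Ui _ _ _⟩ ⟨hyB, A.Up_Ui hy⟩
    · have : pt 0 v A.R (A.R * A.α k + ε) ∈ A.B k ε := by
        refine ⟨(hx0 (k, ε)).1, fun l hl => ?_⟩
        have := sgn (hyB.2 l hl) (hy l)
        simpa using this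
      exact A.two_conv A.W3_S hs (A.B_oc k ε).2 (A.B_S k ε) hUc hUO (A.O_oc v).2 (A.O_W3 hv)
        _ y (pt 0 v A.R (A.R * A.α k + ε)) (hx0 (k, ε)) this hyB
        ⟨hx0 (k, ε), A.pt_Ui _ _ _⟩ ⟨this, A.pt_Ui _ _ _⟩ (A.pt_O hv _ _) hy
  · rintro ⟨k, ε⟩ ⟨l, ε'⟩ hne z hz hz'
    by_cases hkl : k = l
    · exfalso
      subst hkl
      apply hne
      have : 0 < (ε : ℝ) * ε' := sgn hz.1 hz'.1
      rcases ε with ⟨ε, rfl | rfl⟩ <;> rcases ε' with ⟨ε', rfl | rfl⟩ <;> first | rfl | norm_num at this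
    · have hO : z ∈ A.O ((A.β k + A.β l) / 2) := by
        intro m
        change 0 < ((A.β k + A.β l) / 2 - A.β m) * A.rl m z
        by_cases hm : m = k
        · have := hz'.2 m (hm ▸ hkl)
          subst hm; simp only at this; nlinarith
        by_cases hm' : m = l
        · have := hz.2 m hm
          subst hm'; simp only at this; nlinarith
        have h1 := hz.2 m hm
        have h2 := hz'.2 m hm'
        simp only at h1 h2
        nlinarith
      refine ⟨z, A.O_W3 (fun m hm => ?_) hO, hz, hz'⟩
      have := hO m
      simp [hm] at this

/-- stage 5 -/
def W5 : Set (ℂ × ℂ) := A.W4 ∪ ⋃ h : {h : ℝ // A.Gen h}, A.Em h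
lemma W5_open : IsOpen A.W5 := A.W4_open.union (isOpen_iUnion fun _ => (A.Em_oc _).1)
lemma W5_S : A.W5 ⊆ A.S := Set.union_subset A.W4_S (Set.iUnion_subset fun _ => A.Em_S _)
lemma b_W5 : (A.b : ℂ × ℂ) ∈ A.W5 := Or.inl A.b_W4
lemma Em_W5 {h : ℝ} (hh : A.Gen h) : A.Em h ⊆ A.W5 := fun _ hx => Or.inr (Set.mem_iUnion.2 ⟨⟨h, hh⟩, hx⟩)

lemma pt_Em {h : ℝ} (hh : A.Gen h) (r1 r2 : ℝ) : pt r1 r2 (-A.R) (-(A.R * h)) ∈ A.Em h := by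
  refine ⟨A.pt_Di _ _ _, fun k => ?_⟩
  have := mul_pos A.hR (mul_self_pos.2 (sub_ne_zero.2 (hh k)))
  simp; nlinarith

lemma good5 {H : Set (PQ A.b A.b)} (hg : A.Good H A.W4) : A.Good H A.W5 := by
  obtain ⟨s, hs, hb⟩ := hg
  refine A.good_extend A.W4_open A.b_W4 hs hb (fun h : {h : ℝ // A.Gen h} => A.Em h)
    (fun _ => A.Em_oc _) (fun _ => A.Em_S _)
    (fun h => ⟨_, A.Em_S _ (A.pt_Em h.2 0 (-A.Z))⟩) (fun h => A.pt_Em h.2 _ _) (fun v => s _) ?_ ?_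
  · rintro ⟨h, hh⟩ y hy hyE hyD
    have hvert : ∀ v, pt 0 v (-A.R) (-(A.R * h)) ∈ A.W4 := by
      intro v
      by_cases hv : A.GenV v
      · exact A.O_W4 hv (A.pt_O hv _ _)
      · unfold GenV at hv
        push Not at hv
        obtain ⟨k, rfl⟩ := hv
        obtain ⟨ε, hε⟩ := exists_Sg (sub_ne_zero.2 (hh k).symm)
        apply A.B_W4 k ε
        apply A.pt_B
        have := mul_pos A.hR hε
        nlinarith
    have hseg : ∀ v, segment ℝ (pt 0 (-A.Z) (-A.R) (-(A.R * h))) (pt 0 v (-A.R) (-(A.R * h))) ⊆ A.W4 := by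
      rintro v x ⟨a, t, ha, ht, hat, rfl⟩
      obtain rfl : a = 1 - t := by linarith
      have : (1 - t) • pt 0 (-A.Z) (-A.R) (-(A.R * h)) + t • pt 0 v (-A.R) (-(A.R * h)) =
          pt 0 ((1 - t) * (-A.Z) + t * v) (-A.R) (-(A.R * h)) := by
        refine Prod.ext (Complex.ext ?_ ?_) (Complex.ext ?_ ?_) <;> simp <;> ring
      rw [this]; exact hvert _
    have key : ∀ v, ∀ C : Set (ℂ × ℂ), OC C → C ⊆ A.W4 → (y : ℂ × ℂ) ∈ C →
        pt 0 v (-A.R) (-(A.R * h)) ∈ C →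
        tr (⟨_, A.Em_S _ (A.pt_Em hh 0 (-A.Z))⟩ : A.S) y (s _) = s y := by
      intro v C hC hCW hyC hp
      exact hs.two_step A.S_open A.W4_S (A.Em_oc h).2 (A.Em_S h)
        (y := ⟨_, A.Em_S _ (A.pt_Em hh 0 v)⟩) (A.pt_Em hh _ _) (A.pt_Em hh _ _) hyE (hseg v)
        ((hC.2.segment_subset hp hyC).trans hCW)
    rcases hy with hy | hy
    · rcases A.W3_cases hy with ⟨h', hh', hy⟩ | hy | ⟨v, hv, hy⟩
      · refine hs.tr_conv A.S_open A.W4_S (A.Eu_oc h').2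
          (fun _ hx => Or.inl (A.Eu_W3 hh' hx)) ?_ hy
        intro k
        have := mul_pos A.hR (sgn (hy k) (hyE.2 k))
        simp; nlinarith
      · have h1 := hy.2
        have h2 := hyE.1
        linarith
      · exact key v _ (A.O_oc v) (A.O_W4 hv) hy (A.pt_O hv _ _)
    · obtain ⟨⟨k, ε⟩, hy⟩ := Set.mem_iUnion.1 hy
      refine key (A.β k) _ (A.B_oc k ε) (A.B_W4 k ε) hy (A.pt_B _ ?_)
      have := mul_pos A.hR (sgn hy.1 (hyE.2 k))
      nlinarith
  · rintro ⟨h, hh⟩ ⟨h', hh'⟩ _ z hz hz'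
    refine ⟨pt 0 (-A.Z) (-A.R) (-(A.R * h)), A.O_W4 A.negZ (A.lam_O _ _), A.pt_Em hh _ _,
      A.pt_Di _ _ _, fun k => ?_⟩
    have := mul_pos A.hR (sgn (hz.2 k) (hz'.2 k))
    simp; nlinarith

/-- stage 6 index -/
abbrev J6 := {p : ι × ℝ // ∀ l, A.α l = A.α p.1 → p.2 ≠ A.β l}

lemma good6 {H : Set (PQ A.b A.b)} (hg : A.Good H A.W5) :
    A.Good H (A.W5 ∪ ⋃ p : A.J6, A.Nm p.1.1 p.1.2) := by
  obtain ⟨s, hs, hb⟩ := hg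
  have hx0 : ∀ p : A.J6, pt 0 p.1.2 (-A.R) (-(A.R * A.α p.1.1)) ∈ A.Nm p.1.1 p.1.2 := by
    rintro ⟨⟨k, t⟩, ht⟩
    refine ⟨A.pt_Di _ _ _, fun l => ⟨fun hl => ?_, fun hl => ?_⟩⟩
    · have := mul_pos A.hR (mul_self_pos.2 (sub_ne_zero.2 hl))
      simp at this ⊢; nlinarith
    · have := mul_self_pos.2 (sub_ne_zero.2 (ht l hl))
      simpa using this
  refine A.good_extend A.W5_open A.b_W5 hs hb (fun p : A.J6 => A.Nm p.1.1 p.1.2)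
    (fun _ => A.Nm_oc _ _) (fun _ => A.Nm_S _ _)
    (fun p => ⟨_, A.Nm_S _ _ (hx0 p)⟩) hx0 (fun v => s _) ?_ ?_
  · rintro ⟨⟨k, t⟩, ht⟩ y hy hyN hyD
    obtain ⟨h, hh, hyE⟩ := A.D_dn hyD (by have := hyN.1; linarith)
    have hN : pt 0 t (-A.R) (-(A.R * h)) ∈ A.Nm k t := by
      refine ⟨A.pt_Di _ _ _, fun l => ⟨fun hl => ?_, ((hx0 ⟨⟨k, t⟩, ht⟩).2 l).2⟩⟩
      have := mul_pos A.hR (sgn ((hyN.2 l).1 hl) (hyE.2 l))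
      simp at this ⊢; nlinarith
    have key : ∀ C : Set (ℂ × ℂ), OC C → C ⊆ A.W5 → pt 0 t (-A.R) (-(A.R * A.α k)) ∈ C →
        pt 0 t (-A.R) (-(A.R * h)) ∈ C →
        tr (⟨_, A.Nm_S _ _ (hx0 ⟨⟨k, t⟩, ht⟩)⟩ : A.S) y (s _) = s y := by
      intro C hC hCW h1 h2
      exact A.two_conv A.W5_S hs (A.Nm_oc k t).2 (A.Nm_S k t) hC.2 hCW (A.Em_oc h).2 (A.Em_W5 hh)
        _ y _ (hx0 ⟨⟨k, t⟩, ht⟩) hN hyN h1 h2 (A.pt_Em hh _ _) hyE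
    by_cases hv : A.GenV t
    · exact key _ (A.O_oc t) (fun _ hx => Or.inl (A.O_W4 hv hx)) (A.pt_O hv _ _) (A.pt_O hv _ _)
    · unfold GenV at hv
      push Not at hv
      obtain ⟨m, rfl⟩ := hv
      have hm : A.α m ≠ A.α k := fun h => ht m h rfl
      obtain ⟨ε, hε⟩ := exists_Sg (sub_ne_zero.2 hm)
      refine key _ (A.B_oc m ε) (fun _ hx => Or.inl (A.B_W4 m ε hx)) (A.pt_B m ?_) (A.pt_B m ?_)
      · have := mul_pos A.hR hε
        nlinarith
      · have h1 : 0 < (A.α m - h) * (A.α m - A.α k) := sgn (hyE.2 m) ((hyN.2 m).1 hm)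
        have := mul_pos A.hR (sgn hε h1)
        nlinarith
  · rintro p q _ z hz hz'
    obtain ⟨z', ⟨h1, h2⟩, hD⟩ := A.exists_D ((A.Nm_oc _ _).1.inter (A.Nm_oc _ _).1) ⟨hz, hz'⟩
    obtain ⟨h, hh, hE⟩ := A.D_dn hD (by have := h1.1; linarith)
    exact ⟨z', A.Em_W5 hh hE, h1, h2⟩

lemma Dn_cover : A.Dn ⊆ A.W5 ∪ ⋃ p : A.J6, A.Nm p.1.1 p.1.2 := by
  rintro x ⟨hxS, him⟩
  by_cases hD : ∀ k, A.il k x ≠ 0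
  · obtain ⟨h, hh, hE⟩ := A.D_dn (x := x) ⟨him.ne, hD⟩ him
    exact Or.inl (A.Em_W5 hh hE)
  push Not at hD
  obtain ⟨k, hk⟩ := hD
  have hrl : ∀ l, A.α l = A.α k → A.rl l x = (x.2.re - A.α k * x.1.re) - A.β l := by
    intro l hl; simp [rl, hl]
  have hne : ∀ l, A.α l = A.α k → A.rl l x ≠ 0 := by
    intro l hl
    rcases hxS l with h | h
    · exact h
    · exfalso; apply h; unfold il at hk ⊢; rw [hl]; exact hk
  refine Or.inr (Set.mem_iUnion.2 ⟨⟨⟨k, x.2.re - A.α k * x.1.re⟩, fun l hl h => hne l hl ?_⟩,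
    by linarith, fun l => ⟨fun hl => ?_, fun hl => ?_⟩⟩)
  · rw [hrl l hl, sub_eq_zero]; exact h
  · have h2 := mul_self_pos.2 (sub_ne_zero.2 hl)
    have := mul_pos (neg_pos.2 him) h2
    have e : A.il l x = (A.α k - A.α l) * x.1.im := by
      unfold il at hk ⊢; linear_combination hk
    rw [e]; simp only at this ⊢; linarith
  · have := mul_self_pos.2 (hne l hl)
    rw [hrl l hl] at this
    rw [hrl l hl]; exact this

/-- stage 6 -/
def W6 : Set (ℂ × ℂ) := (⋃ h : {h : ℝ // A.Gen h}, A.Eu h) ∪ (A.Up ∪ A.Dn)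
lemma W6_open : IsOpen A.W6 :=
  (isOpen_iUnion fun _ => (A.Eu_oc _).1).union (A.Up_open.union A.Dn_open)
lemma W6_S : A.W6 ⊆ A.S := Set.union_subset (Set.iUnion_subset fun _ => A.Eu_S _)
  (Set.union_subset (fun _ h => h.1) fun _ h => h.1)
lemma Eu_W6 {h : ℝ} (hh : A.Gen h) : A.Eu h ⊆ A.W6 := fun _ hx => Or.inl (Set.mem_iUnion.2 ⟨⟨h, hh⟩, hx⟩)
lemma b_W6 : (A.b : ℂ × ℂ) ∈ A.W6 := Or.inr (Or.inl ⟨A.b.2, A.hR⟩)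

lemma exists_big (f : ι → ℝ) : ∃ M, ∀ k, f k < M := by
  obtain ⟨M, hM⟩ := (Set.finite_range f).bddAbove
  exact ⟨M + 1, fun k => by have := hM ⟨k, rfl⟩; linarith⟩

/-- stage 7 index -/
abbrev J7 := {p : ℝ × ℝ // ∀ l, p.2 - A.α l * p.1 - A.β l ≠ 0}

lemma good7 {H : Set (PQ A.b A.b)} (hg : A.Good H A.W6) :
    A.Good H (A.W6 ∪ ⋃ p : A.J7, A.Ob fun k => p.1.2 - A.α k * p.1.1 - A.β k) := by
  obtain ⟨s, hs, hb⟩ := hg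
  have hO : ∀ (p : A.J7) (y1 y2), pt p.1.1 p.1.2 y1 y2 ∈ A.Ob fun k => p.1.2 - A.α k * p.1.1 - A.β k := by
    intro p y1 y2 k
    exact mul_self_pos.2 (p.2 k)
  obtain ⟨h, hh⟩ := exists_big A.α
  have hG : A.Gen h := fun k => (hh k).ne'
  have hEu : ∀ x : ℂ × ℂ, (∀ k, 0 < A.il k x) → x ∈ A.Eu h := by
    intro x hx k
    exact mul_pos (sub_pos.2 (hh k)) (hx k)
  have hx0 : ∀ p : A.J7, pt p.1.1 p.1.2 0 1 ∈ A.Eu h := fun p => hEu _ (by intro k; simp)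
  refine A.good_extend A.W6_open A.b_W6 hs hb
    (fun p : A.J7 => A.Ob fun k => p.1.2 - A.α k * p.1.1 - A.β k)
    (fun _ => A.Ob_oc _) (fun _ => A.Ob_S _)
    (fun p => ⟨_, A.Ob_S _ (hO p 0 1)⟩) (fun p => hO p _ _) (fun v => s _) ?_ ?_
  · rintro p y hy hyO hyD
    rcases lt_or_gt_of_ne hyD.1 with h0 | h0
    · obtain ⟨M, hM⟩ := exists_big (fun k => A.α k * (-A.R))
      exact A.two_conv A.W6_S hs (A.Ob_oc _).2 (A.Ob_S _) (A.Eu_oc h).2 (A.Eu_W6 hG)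
        ((A.Ob_oc (fun k => p.1.2 - A.α k * p.1.1 - A.β k)).inter Di_oc).2
        (fun _ hx => Or.inr (Or.inr (A.Di_sub (A.Ob_S _) hx)))
        _ y (pt p.1.1 p.1.2 (-A.R) M) (hO p _ _) (hO p _ _) hyO (hx0 p)
        (hEu _ fun k => by have := hM k; rw [il_pt]; linarith)
        ⟨hO p _ _, A.pt_Di _ _ _⟩ ⟨hyO, A.Dn_Di ⟨y.2, h0⟩⟩
    · obtain ⟨M, hM⟩ := exists_big (fun k => A.α k * A.R)
      exact A.two_conv A.W6_S hs (A.Ob_oc _).2 (A.Ob_S _) (A.Eu_oc h).2 (A.Eu_W6 hG)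
        ((A.Ob_oc (fun k => p.1.2 - A.α k * p.1.1 - A.β k)).inter Ui_oc).2
        (fun _ hx => Or.inr (Or.inl (A.Ui_sub (A.Ob_S _) hx)))
        _ y (pt p.1.1 p.1.2 A.R M) (hO p _ _) (hO p _ _) hyO (hx0 p)
        (hEu _ fun k => by have := hM k; rw [il_pt]; linarith)
        ⟨hO p _ _, A.pt_Ui _ _ _⟩ ⟨hyO, A.Up_Ui ⟨y.2, h0⟩⟩
  · rintro p q _ z hz hz'
    exact ⟨pt p.1.1 p.1.2 0 1, A.Eu_W6 hG (hx0 p), hO p _ _,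
      A.Ob_of (fun k => sgn (hz' k) (hz k)) (hO p _ _)⟩

lemma S_cover : A.S ⊆ A.W6 ∪ ⋃ p : A.J7, A.Ob fun k => p.1.2 - A.α k * p.1.1 - A.β k := by
  intro x hx
  rcases lt_trichotomy x.1.im 0 with h | h | h
  · exact Or.inl (Or.inr (Or.inr ⟨hx, h⟩))
  · have hil : ∀ k, A.il k x = x.2.im := by intro k; simp [il, h]
    rcases lt_trichotomy x.2.im 0 with h' | h' | h'
    · obtain ⟨M, hM⟩ := exists_big (fun k => - A.α k)
      refine Or.inl (A.Eu_W6 (h := -M) (fun k hk => ?_) fun k => ?_)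
      · have := hM k; rw [← hk] at this; linarith
      · have := hM k; rw [hil]; exact mul_pos_of_neg_of_neg (by linarith) h'
    · refine Or.inr (Set.mem_iUnion.2 ⟨⟨(x.1.re, x.2.re), fun k => ?_⟩, fun k => ?_⟩)
      · rcases hx k with h1 | h1
        · exact h1
        · rw [hil] at h1; exact absurd h' h1
      · rcases hx k with h1 | h1
        · exact mul_self_pos.2 h1
        · rw [hil] at h1; exact absurd h' h1
    · obtain ⟨M, hM⟩ := exists_big (fun k => A.α k)
      refine Or.inl (A.Eu_W6 (h := M) (fun k hk => ?_) fun k => ?_)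
      · have := hM k; rw [← hk] at this; linarith
      · have := hM k; rw [hil]; exact mul_pos (by linarith) h'
  · exact Or.inl (Or.inr (Or.inl ⟨hx, h⟩))

theorem univ_of_inv (H : Set (PQ A.b A.b))
    (hY : ∀ k, trp (Path.Homotopic.Quotient.mk (A.arc k (-1) (Or.inr rfl))) (tr A.b (A.bk k) H) =
      trp (Path.Homotopic.Quotient.mk (A.arc k 1 (Or.inl rfl))) (tr A.b (A.bk k) H))
    (h1 : Path.Homotopic.Quotient.refl A.b ∈ H) : H = Set.univ := by
  have g2 : A.Good H A.W2 := (A.good2b H hY).mono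
    (Set.union_subset (fun _ hx => Or.inl (Or.inl hx)) A.Up_cover)
  have g6 : A.Good H A.W6 := (A.good6 (A.good5 (A.good4 (A.good3 g2)))).mono (by
    refine Set.union_subset ?_ (Set.union_subset ?_ A.Dn_cover)
    · refine Set.iUnion_subset fun h x hx => ?_
      exact Or.inl (Or.inl (Or.inl (A.Eu_W3 h.2 hx)))
    · exact fun x hx => Or.inl (Or.inl (Or.inl (A.Up_W3 hx))))
  obtain ⟨s, hs, hb⟩ := (A.good7 g6).mono A.S_cover
  rw [Set.eq_univ_iff_forall]
  intro γ
  obtain ⟨p, rfl⟩ := Path.Homotopic.Quotient.mk_surjective γ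
  have := hs.trp_eq A.S_open p fun t => (p t).2
  rw [hb] at this
  rw [← this]
  exact ⟨_, h1, by simp⟩

/-- straight path to the local base point -/
noncomputable def L (k : ι) : Path A.b (A.bk k) :=
  segP A.b (A.bk k) (((A.O_oc (-A.Z)).2.segment_subset A.b_W0 (A.lam_O _ _)).trans (A.O_S _))

/-- local meridian loop -/
noncomputable def Y (k : ι) : Path (A.bk k) (A.bk k) :=
  (A.arc k (-1) (Or.inr rfl)).trans (A.arc k 1 (Or.inl rfl)).symm

/-- conjugation of a local loop to the global base point -/
noncomputable def cj (k : ι) (p : Path (A.bk k) (A.bk k)) : FundamentalGroup A.S A.b :=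
  Path.Homotopic.Quotient.mk (((A.L k).trans p).trans (A.L k).symm)

lemma PQ_cancel {X : Type*} [TopologicalSpace X] {b x y : X} (a : PQ b x) (l u : PQ x y) :
    ((a.trans (l.trans u.symm)).trans a.symm).trans (a.trans u) = a.trans l := by
  simp [Path.Homotopic.Quotient.trans_assoc, ← Path.Homotopic.Quotient.trans_assoc a.symm a,
    Path.Homotopic.Quotient.symm_trans]

theorem closure_y : Subgroup.closure (Set.range fun k => A.cj k (A.Y k)) = ⊤ := by
  set G := Subgroup.closure (Set.range fun k => A.cj k (A.Y k))
  have hu : (G : Set (FundamentalGroup A.S A.b)) = Set.univ := by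
    refine A.univ_of_inv (H := (G : Set (FundamentalGroup A.S A.b))) ?_ G.one_mem
    intro k
    have hk : A.cj k (A.Y k) ∈ G := Subgroup.subset_closure ⟨k, rfl⟩
    have hG : trp (A.cj k (A.Y k) : PQ A.b A.b) (G : Set (FundamentalGroup A.S A.b)) =
        (G : Set (FundamentalGroup A.S A.b)) := by
      ext x
      constructor
      · rintro ⟨p, hp, rfl⟩
        exact G.mul_mem hk hp
      · intro hx
        let x' : FundamentalGroup A.S A.b := x
        refine ⟨(A.cj k (A.Y k))⁻¹ * x', G.mul_mem (G.inv_mem hk) hx, ?_⟩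
        exact mul_inv_cancel_left (A.cj k (A.Y k)) x'
    have e : tr A.b (A.bk k) (G : Set (FundamentalGroup A.S A.b)) =
      trp (Path.Homotopic.Quotient.mk (A.L k)) (G : Set (FundamentalGroup A.S A.b)) := tr_eq _ _
    rw [e]
    conv_rhs => rw [← hG]
    rw [trp_trp, trp_trp, trp_trp]
    exact congrArg (fun x => trp x (G : Set (FundamentalGroup A.S A.b)))
      (PQ_cancel (Path.Homotopic.Quotient.mk (A.L k)) _ _).symm
  exact SetLike.coe_injective (by simpa using hu)

end Arr

open scoped unitInterval Topology

section Square
variable {X : Type*} [TopologicalSpace X]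
/-- identity path of the interval -/
def idP : Path (0 : I) 1 where
  toFun t := t
  continuous_toFun := continuous_id
  source' := rfl
  target' := rfl

lemma square_comm {a b c d : X} (G : C(I × I, X)) (P : Path a b) (Q : Path b d) (Q' : Path a c)
    (P' : Path c d) (R : Path a d) (hP : ∀ s, P s = G (s, 0)) (hQ : ∀ t, Q t = G (1, t))
    (hQ' : ∀ t, Q' t = G (0, t)) (hP' : ∀ s, P' s = G (s, 1)) (hR : ∀ s, R s = G (s, s)) :
    (Path.Homotopic.Quotient.mk P).trans (Path.Homotopic.Quotient.mk Q) =
      Path.Homotopic.Quotient.mk R ∧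
    (Path.Homotopic.Quotient.mk Q').trans (Path.Homotopic.Quotient.mk P') =
      Path.Homotopic.Quotient.mk R := by
  obtain rfl : G (0, 0) = a := by rw [← hP]; simp
  obtain rfl : G (1, 0) = b := by rw [← hP]; simp
  obtain rfl : G (0, 1) = c := by rw [← hQ']; simp
  obtain rfl : G (1, 1) = d := by rw [← hR]; simp
  have e1 : P = (idP.prod (Path.refl 0)).map G.continuous := by ext s; exact hP s
  have e2 : Q = ((Path.refl 1).prod idP).map G.continuous := by ext s; exact hQ s
  have e3 : Q' = ((Path.refl 0).prod idP).map G.continuous := by ext s; exact hQ' s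
  have e4 : P' = (idP.prod (Path.refl 1)).map G.continuous := by ext s; exact hP' s
  have e5 : R = (idP.prod idP).map G.continuous := by ext s; exact hR s
  have k1 : (Path.Homotopic.Quotient.mk (idP.prod (Path.refl (0 : I)))).trans
      (Path.Homotopic.Quotient.mk ((Path.refl (1 : I)).prod idP)) =
      Path.Homotopic.Quotient.mk (idP.prod idP) := by
    rw [← Path.Homotopic.prod_lift, ← Path.Homotopic.prod_lift, ← Path.Homotopic.prod_lift,
      Path.Homotopic.comp_prod_eq_prod_comp]
    simp
  have k2 : (Path.Homotopic.Quotient.mk ((Path.refl (0 : I)).prod idP)).trans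
      (Path.Homotopic.Quotient.mk (idP.prod (Path.refl (1 : I)))) =
      Path.Homotopic.Quotient.mk (idP.prod idP) := by
    rw [← Path.Homotopic.prod_lift, ← Path.Homotopic.prod_lift, ← Path.Homotopic.prod_lift,
      Path.Homotopic.comp_prod_eq_prod_comp]
    simp
  have k1' := congrArg (fun q => Path.Homotopic.Quotient.map q G) k1
  have k2' := congrArg (fun q => Path.Homotopic.Quotient.map q G) k2
  subst e1 e2 e3 e4 e5
  constructor
  · rw [← Path.Homotopic.Quotient.mk_trans, ← Path.map_trans]
    rw [← Path.Homotopic.Quotient.mk_trans] at k1'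
    exact k1'
  · rw [← Path.Homotopic.Quotient.mk_trans, ← Path.map_trans]
    rw [← Path.Homotopic.Quotient.mk_trans] at k2'
    exact k2'
end Square

/-- the circle -/
noncomputable def ee (t : ℝ) : ℂ := Complex.exp (2 * Real.pi * Complex.I * t)
lemma ee_zero : ee 0 = 1 := by simp [ee]
lemma ee_one : ee 1 = 1 := by simp [ee, Complex.exp_two_pi_mul_I]
lemma ee_norm (t : ℝ) : ‖ee t‖ = 1 := by
  rw [ee, show 2 * (Real.pi : ℂ) * Complex.I * t = ((2 * Real.pi * t : ℝ) : ℂ) * Complex.I by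
    push_cast; ring]
  exact Complex.norm_exp_ofReal_mul_I _
lemma ee_cont : Continuous ee := by unfold ee; fun_prop
lemma ee_cs (t : ℝ) : ee t = Real.cos (2 * Real.pi * t) + Real.sin (2 * Real.pi * t) * Complex.I := by
  rw [ee, show 2 * (Real.pi : ℂ) * Complex.I * t = ((2 * Real.pi * t : ℝ) : ℂ) * Complex.I by
    push_cast; ring, Complex.exp_mul_I]
  push_cast; rfl

namespace Arr
variable {ι : Type*} [Fintype ι] (A : Arr ι)

lemma form_re (l : ι) (x : ℂ × ℂ) : (x.2 - A.α l * x.1 - A.β l).re = A.rl l x := by simp [rl]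
lemma form_im (l : ι) (x : ℂ × ℂ) : (x.2 - A.α l * x.1 - A.β l).im = A.il l x := by simp [il]

lemma mem_S {x : ℂ × ℂ} : x ∈ A.S ↔ ∀ l, x.2 - A.α l * x.1 - A.β l ≠ 0 := by
  refine forall_congr' fun l => ?_
  rw [← A.form_re, ← A.form_im, ne_eq, ne_eq, ne_eq, Complex.ext_iff]
  simp only [Complex.zero_re, Complex.zero_im]
  tauto

/-- the affine forms -/
noncomputable def f (l : ι) : C(A.S, Cs) where
  toFun x := ⟨x.1.2 - A.α l * x.1.1 - A.β l, A.mem_S.1 x.2 l⟩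
  continuous_toFun := by refine Continuous.subtype_mk ?_ _; fun_prop

lemma f_val (l : ι) (x : A.S) : (A.f l x : ℂ) = x.1.2 - A.α l * x.1.1 - A.β l := rfl

/-- point on the tube -/
noncomputable def gp (k : ι) (e ζ : ℂ) : ℂ × ℂ := (Complex.I * A.R * e, A.α k * (Complex.I * A.R * e) + ζ)

lemma gp_S (k : ι) {e ζ : ℂ} (he : ‖e‖ = 1) (hζ : ‖ζ‖ ≤ A.Z) (h : ∀ l, A.α l = A.α k → ζ ≠ A.β l) :
    A.gp k e ζ ∈ A.S := by
  rw [mem_S]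
  intro l h0
  by_cases hl : A.α l = A.α k
  · apply h l hl
    simp only [gp, hl] at h0
    linear_combination h0
  · have h1 : ((A.R * (A.α k - A.α l) : ℝ) : ℂ) * (Complex.I * e) = A.β l - ζ := by
      simp only [gp] at h0; push_cast
      linear_combination h0
    have h2 := congrArg norm h1
    rw [norm_mul, norm_mul, he, Complex.norm_I, Complex.norm_real, Real.norm_eq_abs] at h2
    have h3 := A.hRZ' (k := k) (l := l) (Ne.symm hl)
    have h4 := norm_sub_le (A.β l : ℂ) ζ
    rw [Complex.norm_real, Real.norm_eq_abs] at h4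
    have := A.hZ l
    linarith

lemma bk_gp (k : ι) : (A.bk k : ℂ × ℂ) = A.gp k 1 (-A.Z) := by
  apply Prod.ext <;> apply Complex.ext <;> simp [bk, gp]; ring

lemma ne_of_norm {ζ : ℂ} (h : A.Z ≤ ‖ζ‖) (l : ι) : ζ ≠ A.β l := by
  rintro rfl
  rw [Complex.norm_real, Real.norm_eq_abs] at h
  have := A.hZ l; linarith

lemma normZ : ‖(-A.Z : ℂ)‖ = A.Z := by
  rw [norm_neg, Complex.norm_real, Real.norm_eq_abs, abs_of_pos A.hZ0]

/-- the loop at infinity around the class of k -/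
noncomputable def Dl (k : ι) : Path (A.bk k) (A.bk k) where
  toFun s := ⟨A.gp k (ee s) (-A.Z), A.gp_S k (ee_norm _) A.normZ.le fun l _ => A.ne_of_norm A.normZ.ge l⟩
  continuous_toFun := by
    refine Continuous.subtype_mk ?_ _
    have := ee_cont
    unfold gp; fun_prop
  source' := Subtype.ext (by simp [ee_zero, bk_gp])
  target' := Subtype.ext (by simp [ee_one, bk_gp])

lemma normZe (t : ℝ) : ‖(-A.Z : ℂ) * ee t‖ = A.Z := by rw [norm_mul, A.normZ, ee_norm, mul_one]

/-- the loop around a whole class -/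
noncomputable def Y' (k : ι) : Path (A.bk k) (A.bk k) where
  toFun s := ⟨A.gp k 1 (-A.Z * ee s), A.gp_S k (by simp) (A.normZe _).le fun l _ => A.ne_of_norm (A.normZe _).ge l⟩
  continuous_toFun := by
    refine Continuous.subtype_mk ?_ _
    have := ee_cont
    unfold gp; fun_prop
  source' := Subtype.ext (by simp [ee_zero, bk_gp])
  target' := Subtype.ext (by simp [ee_one, bk_gp])

/-- the diagonal loop -/
noncomputable def Tk (k : ι) : Path (A.bk k) (A.bk k) where
  toFun s := ⟨A.gp k (ee s) (-A.Z * ee s), A.gp_S k (ee_norm _) (A.normZe _).le fun l _ => A.ne_of_norm (A.normZe _).ge l⟩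
  continuous_toFun := by
    refine Continuous.subtype_mk ?_ _
    have := ee_cont
    unfold gp; fun_prop
  source' := Subtype.ext (by simp [ee_zero, bk_gp])
  target' := Subtype.ext (by simp [ee_one, bk_gp])

lemma Y_val (k : ι) (t : I) : (A.Y k t : ℂ × ℂ) = A.gp k 1 (A.cc k - A.rho k * ee t) := by
  have key : ∀ (ε s θ : ℝ), Real.cos (Real.pi * s) = Real.cos θ → ε * Real.sin (Real.pi * s) = - Real.sin θ →
      A.arcf k ε s = A.gp k 1 (A.cc k - A.rho k * (Real.cos θ + Real.sin θ * Complex.I)) := by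
    intro ε s θ h1 h2
    have h3 : ε * (A.rho k * Real.sin (Real.pi * s)) = - (A.rho k * Real.sin θ) := by
      linear_combination (A.rho k) * h2
    unfold arcf
    rw [h1, h3]
    generalize Real.cos θ = c
    generalize Real.sin θ = d
    apply Prod.ext <;> apply Complex.ext <;> simp [gp]
    ring
  rw [ee_cs]
  unfold Y
  rw [Path.trans_apply]
  split_ifs with h
  · refine key _ _ _ ?_ ?_ <;> simp only
    · congr 1; ring
    · rw [show Real.pi * (2 * (t : ℝ)) = 2 * Real.pi * t by ring]; ring
  · refine key _ _ _ ?_ ?_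
    · change Real.cos (Real.pi * (1 - (2 * (t : ℝ) - 1))) = _
      rw [show Real.pi * (1 - (2 * (t : ℝ) - 1)) = 2 * Real.pi - 2 * Real.pi * t by ring,
        Real.cos_two_pi_sub]
    · change 1 * Real.sin (Real.pi * (1 - (2 * (t : ℝ) - 1))) = _
      rw [show Real.pi * (1 - (2 * (t : ℝ) - 1)) = 2 * Real.pi - 2 * Real.pi * t by ring,
        Real.sin_two_pi_sub, one_mul]

lemma zeta_le (k : ι) (t : ℝ) : ‖(A.cc k - A.rho k * ee t : ℂ)‖ ≤ A.Z := by
  refine (norm_sub_le _ _).trans ?_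
  rw [norm_mul, ee_norm, Complex.norm_real, Complex.norm_real, Real.norm_eq_abs, Real.norm_eq_abs,
    abs_of_pos (A.rho_pos k), abs_of_nonpos (by unfold cc; linarith [A.hg2 k])]
  unfold cc rho; linarith

lemma Y_ne (k : ι) (t : I) (l : ι) (h : A.α l = A.α k) : (A.cc k - A.rho k * ee t : ℂ) ≠ A.β l := by
  have h1 := A.mem_S.1 (A.Y k t).2 l
  rw [A.Y_val] at h1
  intro h2
  apply h1
  simp only [gp, h2, h]; ring

/-- commuting square -/
noncomputable def GG (k : ι) (ζ : C(I, ℂ)) (h1 : ∀ t, ‖ζ t‖ ≤ A.Z)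
    (h2 : ∀ t l, A.α l = A.α k → ζ t ≠ A.β l) : C(I × I, A.S) where
  toFun x := ⟨A.gp k (ee x.1) (ζ x.2), A.gp_S k (ee_norm _) (h1 _) (h2 _)⟩
  continuous_toFun := by
    refine Continuous.subtype_mk ?_ _
    have := ee_cont
    unfold gp; fun_prop

lemma DY (k : ι) : (Path.Homotopic.Quotient.mk (A.Dl k)).trans (Path.Homotopic.Quotient.mk (A.Y k)) =
    (Path.Homotopic.Quotient.mk (A.Y k)).trans (Path.Homotopic.Quotient.mk (A.Dl k)) := by
  let G := A.GG k ⟨fun t => A.cc k - A.rho k * ee t, by have := ee_cont; fun_prop⟩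
    (fun t => A.zeta_le k t) (fun t => A.Y_ne k t)
  have hz : (A.cc k : ℂ) - A.rho k = -A.Z := by
    have : A.cc k - A.rho k = - A.Z := by unfold cc rho; ring
    exact_mod_cast this
  have h0 : G (0, 0) = A.bk k := by
    apply Subtype.ext; rw [bk_gp]; simp [G, GG, ee_zero, hz]
  have h1 : G (1, 1) = A.bk k := by
    apply Subtype.ext; rw [bk_gp]; simp [G, GG, ee_one, hz]
  have := square_comm G (A.Dl k) (A.Y k) (A.Y k) (A.Dl k)
    ⟨⟨fun t => G (t, t), by fun_prop⟩, h0, h1⟩ ?_ ?_ ?_ ?_ (fun _ => rfl)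
  · exact this.1.trans this.2.symm
  · intro s; apply Subtype.ext; simp [G, GG, Dl, ee_zero, hz]
  · intro s; apply Subtype.ext; rw [Y_val]; simp [G, GG, ee_one]
  · intro s; apply Subtype.ext; rw [Y_val]; simp [G, GG, ee_zero]
  · intro s; apply Subtype.ext; simp [G, GG, Dl, ee_one, hz]

lemma DY' (k : ι) :
    (Path.Homotopic.Quotient.mk (A.Dl k)).trans (Path.Homotopic.Quotient.mk (A.Y' k)) =
      Path.Homotopic.Quotient.mk (A.Tk k) ∧
    (Path.Homotopic.Quotient.mk (A.Y' k)).trans (Path.Homotopic.Quotient.mk (A.Dl k)) =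
      Path.Homotopic.Quotient.mk (A.Tk k) := by
  let G := A.GG k ⟨fun t => -A.Z * ee t, by have := ee_cont; fun_prop⟩
    (fun t => (A.normZe t).le) (fun t l _ => A.ne_of_norm (A.normZe t).ge l)
  refine square_comm G (A.Dl k) (A.Y' k) (A.Y' k) (A.Dl k) (A.Tk k) ?_ ?_ ?_ ?_ (fun _ => rfl)
  · intro s; apply Subtype.ext; simp [G, GG, Dl, ee_zero]
  · intro s; apply Subtype.ext; simp [G, GG, ee_one, Y']
  · intro s; apply Subtype.ext; simp [G, GG, ee_zero, Y']
  · intro s; apply Subtype.ext; simp [G, GG, Dl, ee_one]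

lemma rot_S (y : ℝ) {e : ℂ} (he : ‖e‖ = 1) :
    ((e * (Complex.I * A.R), e * (-A.Z + y * Complex.I)) : ℂ × ℂ) ∈ A.S := by
  rw [mem_S]
  intro l h0
  have h1 : e * (((-A.Z : ℝ) : ℂ) + ((y - A.α l * A.R : ℝ) : ℂ) * Complex.I) = A.β l := by
    push_cast; linear_combination h0
  have h2 := congrArg norm h1
  rw [norm_mul, he, one_mul, Complex.norm_real, Real.norm_eq_abs] at h2
  have h3 := Complex.abs_re_le_norm (((-A.Z : ℝ) : ℂ) + ((y - A.α l * A.R : ℝ) : ℂ) * Complex.I)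
  rw [h2] at h3
  simp only [Complex.add_re, Complex.ofReal_re, Complex.re_ofReal_mul, Complex.I_re, mul_zero,
    add_zero, abs_neg, abs_of_pos A.hZ0] at h3
  have := A.hZ l
  linarith

lemma b_val : (A.b : ℂ × ℂ) = (1 * (Complex.I * A.R), 1 * (-A.Z + (0 : ℝ) * Complex.I)) := by
  apply Prod.ext <;> apply Complex.ext <;> simp [b]

/-- total loop -/
noncomputable def T : Path A.b A.b where
  toFun s := ⟨_, A.rot_S 0 (ee_norm s)⟩
  continuous_toFun := by
    refine Continuous.subtype_mk ?_ _
    have := ee_cont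
    fun_prop
  source' := Subtype.ext (by simp [ee_zero, b_val])
  target' := Subtype.ext (by simp [ee_one, b_val])

lemma LT (k : ι) : (Path.Homotopic.Quotient.mk (A.L k)).trans (Path.Homotopic.Quotient.mk (A.Tk k)) =
    (Path.Homotopic.Quotient.mk A.T).trans (Path.Homotopic.Quotient.mk (A.L k)) := by
  let G : C(I × I, A.S) := ⟨fun x => ⟨_, A.rot_S (x.1 * (A.R * A.α k)) (ee_norm x.2)⟩, by
    refine Continuous.subtype_mk ?_ _
    have := ee_cont
    fun_prop⟩
  have hL : ∀ s : I, (A.L k s : ℂ × ℂ) = (1 * (Complex.I * A.R),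
      1 * (-A.Z + (s * (A.R * A.α k) : ℝ) * Complex.I)) := by
    intro s
    refine (segP_val _ _ _ _).trans ?_
    apply Prod.ext <;> apply Complex.ext <;> simp [b, bk] <;> ring
  have h0 : G (0, 0) = A.b := by
    apply Subtype.ext; rw [b_val]; simp [G, ee_zero]
  have h1 : G (1, 1) = A.bk k := by
    apply Subtype.ext; rw [bk_gp]; simp [G, ee_one, gp]; ring
  have := square_comm G (A.L k) (A.Tk k) A.T (A.L k)
    ⟨⟨fun t => G (t, t), by fun_prop⟩, h0, h1⟩ ?_ ?_ ?_ ?_ (fun _ => rfl)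
  · exact this.1.trans this.2.symm
  · intro s; apply Subtype.ext; rw [hL]; simp [G, ee_zero]
  · intro s; apply Subtype.ext; simp [G, Tk, gp]; constructor <;> ring
  · intro s; apply Subtype.ext; simp [G, T]
  · intro s; apply Subtype.ext; rw [hL]; simp [G, ee_one]

lemma PQ_conj {X : Type*} [TopologicalSpace X] {b x : X} (a : PQ b x) (p q : PQ x x) :
    ((a.trans p).trans a.symm).trans ((a.trans q).trans a.symm) = (a.trans (p.trans q)).trans a.symm := by
  simp [Path.Homotopic.Quotient.trans_assoc, ← Path.Homotopic.Quotient.trans_assoc a.symm a,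
    Path.Homotopic.Quotient.symm_trans]

lemma PQ_conj2 {X : Type*} [TopologicalSpace X] {b x : X} (a : PQ b x) (p : PQ x x) (q : PQ b b)
    (h : a.trans p = q.trans a) : (a.trans p).trans a.symm = q := by
  rw [h]
  simp [Path.Homotopic.Quotient.trans_assoc, Path.Homotopic.Quotient.trans_symm]

lemma cj_mul (k : ι) (p q r : Path (A.bk k) (A.bk k))
    (h : (Path.Homotopic.Quotient.mk p).trans (Path.Homotopic.Quotient.mk q) =
      Path.Homotopic.Quotient.mk r) : A.cj k q * A.cj k p = A.cj k r := by
  have := PQ_conj (Path.Homotopic.Quotient.mk (A.L k)) (Path.Homotopic.Quotient.mk p)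
    (Path.Homotopic.Quotient.mk q)
  rw [h] at this
  exact this

/-- class of the total loop -/
noncomputable def TT : FundamentalGroup A.S A.b := Path.Homotopic.Quotient.mk A.T

lemma cj_T (k : ι) : A.cj k (A.Tk k) = A.TT :=
  PQ_conj2 (Path.Homotopic.Quotient.mk (A.L k)) _ _ (A.LT k)

lemma comm_DY (k : ι) : Commute (A.cj k (A.Dl k)) (A.cj k (A.Y k)) :=
  (A.cj_mul k (A.Y k) (A.Dl k) _ rfl).trans (A.cj_mul k (A.Dl k) (A.Y k) _ (A.DY k)).symm

lemma comm_DT (k : ι) : Commute (A.cj k (A.Dl k)) A.TT := by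
  have h1 := A.cj_mul k _ _ _ (A.DY' k).1
  have h2 := A.cj_mul k _ _ _ (A.DY' k).2
  rw [cj_T] at h1 h2
  have : Commute (A.cj k (A.Dl k)) (A.cj k (A.Y' k)) := h2.trans h1.symm
  rw [← h1]
  exact this.mul_right (Commute.refl _)

lemma comm_YT (k : ι) (h : ∀ l, A.α l = A.α k → l = k) : Commute (A.cj k (A.Y k)) A.TT := by
  have h1 := A.cj_mul k _ _ _ (A.DY' k).1
  rw [cj_T] at h1
  have hg := A.hg4 k fun l hl => by rw [h l hl]
  have : A.Y k = A.Y' k := by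
    apply Path.ext; funext t
    apply Subtype.ext
    rw [Y_val]
    simp [Y', cc, rho, hg]
  rw [← h1, ← this]
  exact (Commute.refl _).mul_right (A.comm_DY k).symm
end Arr

open scoped unitInterval Topology

namespace Arr
variable {ι : Type*} [Fintype ι] (A : Arr ι)

lemma windZ_cj (l k : ι) (p : Path (A.bk k) (A.bk k)) :
    windZ (A.f l) (A.cj k p) = windZ (A.f l) (Path.Homotopic.Quotient.mk p : FundamentalGroup A.S (A.bk k)) :=
  windZ_conj (A.f l) (A.L k) p

lemma windT (l : ι) : windZ (A.f l) A.TT = 1 := by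
  refine (windZ_of_circle (A.f l) A.T (-A.β l) (-A.Z - A.α l * (Complex.I * A.R)) ?_).1 ?_
  · intro t
    change ee t * (-A.Z + (0 : ℝ) * Complex.I) - A.α l * (ee t * (Complex.I * A.R)) - A.β l = _ + _ * ee t
    push_cast; ring
  · rw [norm_neg, Complex.norm_real, Real.norm_eq_abs]
    refine (A.hZ l).trans_le ?_
    have h := Complex.abs_re_le_norm (-A.Z - A.α l * (Complex.I * A.R))
    simpa [abs_of_pos A.hZ0] using h

lemma norm_IR (k l : ι) (c : ℝ) (h : A.α k ≠ A.α l) (hc : |c| ≤ 2 * A.Z) :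
    ‖(c : ℂ)‖ < ‖Complex.I * A.R * (A.α k - A.α l)‖ := by
  have h3 := A.hRZ' h
  rw [mul_assoc, norm_mul, Complex.norm_I, one_mul, ← Complex.ofReal_sub, ← Complex.ofReal_mul,
    Complex.norm_real, Complex.norm_real, Real.norm_eq_abs, Real.norm_eq_abs]
  linarith

lemma windD [DecidableEq ℝ] (k l : ι) : windZ (A.f l) (A.cj k (A.Dl k)) = if A.α l = A.α k then 0 else 1 := by
  rw [windZ_cj]
  have := windZ_of_circle (A.f l) (A.Dl k) (-A.Z - A.β l : ℝ) (Complex.I * A.R * (A.α k - A.α l)) (by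
    intro t
    change A.α k * (Complex.I * A.R * ee t) + -A.Z - A.α l * (Complex.I * A.R * ee t) - A.β l = _ + _ * ee t
    push_cast; ring)
  have hb := abs_lt.1 (A.hZ l)
  have hZ0 := A.hZ0
  split_ifs with h
  · apply this.2
    rw [h, Complex.norm_real, Real.norm_eq_abs]
    simp only [sub_self, mul_zero, norm_zero]
    exact abs_pos.2 (by linarith)
  · apply this.1
    refine A.norm_IR k l _ (Ne.symm h) ?_
    rw [abs_le]; constructor <;> linarith

lemma windY (k l : ι) : (A.α l = A.α k ∧ A.β l ≤ A.β k → windZ (A.f l) (A.cj k (A.Y k)) = 1) ∧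
    (¬ (A.α l = A.α k ∧ A.β l ≤ A.β k) → windZ (A.f l) (A.cj k (A.Y k)) = 0) := by
  rw [windZ_cj]
  have := windZ_of_circle (A.f l) (A.Y k) (Complex.I * A.R * (A.α k - A.α l) + (A.cc k - A.β l : ℝ))
      ((-A.rho k : ℝ) : ℂ) (by
    intro t
    rw [f_val, Y_val]
    change A.α k * (Complex.I * A.R * 1) + (A.cc k - A.rho k * ee t) - A.α l * (Complex.I * A.R * 1) - A.β l = _ + _ * ee t
    push_cast; ring)
  have hb := abs_lt.1 (A.hZ l)
  have hb' := abs_lt.1 (A.hZ k)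
  have hZ0 := A.hZ0
  have hrho := A.rho_pos k
  have hg1 := A.hg1 k
  have hg2 := A.hg2 k
  by_cases h : A.α l = A.α k
  · have e : ‖(Complex.I * A.R * (A.α k - A.α l) + (A.cc k - A.β l : ℝ) : ℂ)‖ = |A.cc k - A.β l| := by
      rw [h, sub_self, mul_zero, zero_add, Complex.norm_real, Real.norm_eq_abs]
    rw [e, Complex.norm_real, norm_neg, Real.norm_eq_abs, abs_of_pos hrho] at this
    constructor
    · rintro ⟨-, h2⟩
      apply this.1
      rw [abs_lt]; unfold cc rho; constructor <;> linarith
    · intro h2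
      have h3 : A.β k < A.β l := by
        by_contra h4; exact h2 ⟨h, not_lt.1 h4⟩
      have h5 := A.hg3 k l h h3
      apply this.2
      rw [lt_abs]; right; unfold cc rho; linarith
  · refine ⟨fun h' => absurd h'.1 h, fun _ => this.2 ?_⟩
    have h1 := A.hRZ' (Ne.symm h)
    have h2 : ‖(Complex.I * A.R * (A.α k - A.α l) : ℂ)‖ = |A.R * (A.α k - A.α l)| := by
      rw [mul_assoc, norm_mul, Complex.norm_I, one_mul, ← Complex.ofReal_sub, ← Complex.ofReal_mul,
        Complex.norm_real, Real.norm_eq_abs]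
    have h3 := Complex.abs_im_le_norm (Complex.I * A.R * (A.α k - A.α l) + (A.cc k - A.β l : ℝ))
    have h4 : (Complex.I * A.R * (A.α k - A.α l) + (A.cc k - A.β l : ℝ) : ℂ).im = A.R * (A.α k - A.α l) := by
      simp
    rw [h4] at h3
    rw [Complex.norm_real, norm_neg, Real.norm_eq_abs, abs_of_pos hrho]
    have := A.rho_le k
    linarith

theorem partF [DecidableEq ℝ] (hcl : ∀ k, (∀ l, A.α l = A.α k → l = k) ∨
      Nat.gcd (1 + (Finset.univ.filter fun l => A.α l = A.α k).card) (Fintype.card ι + 1) = 1) :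
    Nonempty (Additive (Abelianization (KA fun l => wind (A.f l) A.b)) ≃+ (ι → ℤ)) := by
  refine algA (fun l => wind (A.f l) A.b) (fun k => A.cj k (A.Y k)) A.closure_y A.TT
    (fun l => A.windT l) ?_ ?_
  · intro k
    rcases hcl k with h | h
    · exact Or.inl (A.comm_YT k h)
    · refine Or.inr ⟨A.cj k (A.Dl k), _, A.comm_DY k, A.comm_DT k, ?_, h⟩
      simp only [wind_toAdd, windD]
      have h1 : ∀ l, (if A.α l = A.α k then (0 : ℤ) else 1) = 1 - if A.α l = A.α k then 1 else 0 := by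
        intro l; split_ifs <;> simp
      rw [Finset.sum_congr rfl fun l _ => h1 l, Finset.sum_sub_distrib, Finset.sum_boole]
      simp
      ring
  · intro c hc
    simp only [wind_toAdd] at hc
    by_contra hne
    have hS : (Finset.univ.filter fun k => c k ≠ 0).Nonempty := by
      by_contra h
      rw [Finset.not_nonempty_iff_eq_empty, Finset.filter_eq_empty_iff] at h
      apply hne; funext k; simpa using h (Finset.mem_univ k)
    obtain ⟨k, hk, hmax⟩ := Finset.exists_max_image _ A.β hS
    simp only [Finset.mem_filter, Finset.mem_univ, true_and] at hk hmax
    apply hk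
    rw [← hc k, Finset.sum_eq_single k]
    · rw [(A.windY k k).1 ⟨rfl, le_rfl⟩, mul_one]
    · intro l _ hl
      by_cases h : c l = 0
      · simp [h]
      · have h1 := hmax l h
        rw [(A.windY l k).2, mul_zero]
        rintro ⟨-, h2⟩
        exact hl (A.inj (le_antisymm h1 h2))
    · simp
end Arr

open scoped unitInterval Topology

lemma windZ_change {X : Type*} [TopologicalSpace X] {x y : X} (p : Path x y) :
    ∃ e : FundamentalGroup X x ≃* FundamentalGroup X y,
      ∀ (f : C(X, Cs)) (g : FundamentalGroup X x), windZ f (e g) = windZ f g := by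
  refine ⟨FundamentalGroup.fundamentalGroupMulEquivOfPath p, fun f g => ?_⟩
  obtain ⟨q, rfl⟩ := Path.Homotopic.Quotient.mk_surjective g
  rw [← windZ_conj f p.symm q]
  congr 1
  have h : ∀ (a : PQ x y) (b : PQ x x), a.symm.trans (b.trans a) = (a.symm.trans b).trans a.symm.symm := by
    intro a b
    obtain ⟨a, rfl⟩ := Path.Homotopic.Quotient.mk_surjective a
    rw [Path.Homotopic.Quotient.trans_assoc, ← Path.Homotopic.Quotient.mk_symm,
      ← Path.Homotopic.Quotient.mk_symm, Path.symm_symm]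
  exact h (Path.Homotopic.Quotient.mk p) (Path.Homotopic.Quotient.mk q)

namespace Arr
variable {ι : Type*} [Fintype ι]

lemma exists_Arr (α β : ι → ℝ) (hβ : Function.Injective β) : ∃ A : Arr ι, A.α = α ∧ A.β = β := by
  obtain ⟨Z0, hZ0⟩ := exists_big fun k => |β k|
  set Z := max Z0 1 with hZdef
  have hZpos : 0 < Z := lt_of_lt_of_le one_pos (le_max_right _ _)
  have hZ : ∀ k, |β k| < Z := fun k => (hZ0 k).trans_le (le_max_left _ _)
  obtain ⟨R0, hR0⟩ := exists_big fun x : ι × ι => 2 * Z / |α x.1 - α x.2|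
  set R := max R0 1 with hRdef
  have hRpos : 0 < R := lt_of_lt_of_le one_pos (le_max_right _ _)
  have hg : ∀ k, ∃ g, β k < g ∧ g ≤ Z ∧ (∀ l, α l = α k → β k < β l → g < β l) ∧
      ((∀ l, α l = α k → β l ≤ β k) → g = Z) := by
    classical
    intro k
    have hk := abs_lt.1 (hZ k)
    by_cases h : (Finset.univ.filter fun l => α l = α k ∧ β k < β l).Nonempty
    · obtain ⟨l, hl, hmin⟩ := Finset.exists_min_image _ β h
      simp only [Finset.mem_filter, Finset.mem_univ, true_and] at hl hmin
      have hl' := abs_lt.1 (hZ l)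
      refine ⟨(β k + β l) / 2, by linarith, by linarith, fun i h1 h2 => ?_, fun h' => ?_⟩
      · have := hmin i ⟨h1, h2⟩; linarith
      · have := h' l hl.1; linarith
    · refine ⟨Z, by linarith, le_rfl, fun l h1 h2 => ?_, fun _ => rfl⟩
      exact absurd ⟨l, by simp [h1, h2]⟩ h
  choose g hg1 hg2 hg3 hg4 using hg
  refine ⟨⟨α, β, Z, R, g, hβ, hZpos, hZ, hRpos, fun k l h => ?_, hg1, hg2, hg3, hg4⟩, rfl, rfl⟩
  have h1 : 0 < |α k - α l| := abs_pos.2 (sub_ne_zero.2 h)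
  have h2 := (hR0 (k, l)).trans_le (le_max_left R0 1)
  rwa [div_lt_iff₀ h1] at h2

variable (A : Arr ι)

lemma joined (x y : A.S) : Joined x y := by
  let P : ℂ → ℂ × ℂ := fun τ => x.1 + τ • (y.1 - x.1)
  have hP : Continuous P := by fun_prop
  let s : Set ℂ := ⋃ l, {τ | (P τ).2 - A.α l * (P τ).1 - A.β l = 0}
  have hs : s.Countable := by
    refine Set.countable_iUnion fun l => Set.Subsingleton.countable ?_
    intro τ h1 τ' h2
    have h1 : (P τ).2 - A.α l * (P τ).1 - A.β l = 0 := h1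
    have h2 : (P τ').2 - A.α l * (P τ').1 - A.β l = 0 := h2
    have h0 := A.mem_S.1 x.2 l
    simp only [P, Prod.fst_add, Prod.snd_add, Prod.smul_fst, Prod.smul_snd, Prod.fst_sub,
      Prod.snd_sub, smul_eq_mul] at h1 h2
    have h3 : (τ - τ') * (x.1.2 - A.α l * x.1.1 - A.β l) = 0 := by
      linear_combination τ * h2 - τ' * h1
    rcases mul_eq_zero.1 h3 with h | h
    · exact sub_eq_zero.1 h
    · exact absurd h h0
  have hsc : ∀ τ ∈ sᶜ, P τ ∈ A.S := by
    intro τ hτ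
    rw [mem_S]
    intro l h
    exact hτ (Set.mem_iUnion.2 ⟨l, h⟩)
  have hpc := hs.isPathConnected_compl_of_one_lt_rank (E := ℂ) (by
    rw [Complex.rank_real_complex]; exact Cardinal.one_lt_two)
  have h0 : (0 : ℂ) ∈ sᶜ := by
    intro h
    obtain ⟨l, hl⟩ := Set.mem_iUnion.1 h
    have hl : (P 0).2 - A.α l * (P 0).1 - A.β l = 0 := hl
    exact A.mem_S.1 x.2 l (by simpa [P] using hl)
  have h1 : (1 : ℂ) ∈ sᶜ := by
    intro h
    obtain ⟨l, hl⟩ := Set.mem_iUnion.1 h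
    have hl : (P 1).2 - A.α l * (P 1).1 - A.β l = 0 := hl
    exact A.mem_S.1 y.2 l (by simpa [P] using hl)
  obtain ⟨γ, hγ⟩ := hpc.joinedIn 0 h0 1 h1
  exact ⟨⟨⟨fun t => ⟨P (γ t), hsc _ (hγ t)⟩, Continuous.subtype_mk (hP.comp γ.continuous) _⟩,
    Subtype.ext (by simp [P]), Subtype.ext (by simp [P])⟩⟩
end Arr

lemma exists_avoid {κ : Type*} [Finite κ] (P : κ → ℝ → Prop)
    (h : ∀ i, ∀ s t, P i s → P i t → s = t) : ∃ s, ∀ i, ¬ P i s := by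
  have hf : (⋃ i, {s | P i s}).Finite :=
    Set.finite_iUnion fun i => Set.Subsingleton.finite fun s hs t ht => h i s t hs ht
  obtain ⟨s, hs⟩ := hf.exists_notMem
  exact ⟨s, fun i hi => hs (Set.mem_iUnion.2 ⟨i, hi⟩)⟩

lemma coords (n : ℕ) (a : Fin n → Fin 3 → ℝ) (ha : ∀ i, a i ≠ 0)
    (hind : ∀ i j : Fin n, i ≠ j → LinearIndependent ℝ ![a i, a j])
    (ℓ : Fin n → (Fin 3 → ℂ) → ℂ) (hℓ : ∀ i z, ℓ i z = ∑ k, (a i k : ℂ) * z k) (j : Fin n) :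
    ∃ (E : (Fin 3 → ℂ) ≃ₗ[ℂ] (ℂ × ℂ × ℂ)) (c α β : {i // i ≠ j} → ℝ),
      (∀ z, (E z).1 = ℓ j z) ∧ (∀ k, c k ≠ 0) ∧ Function.Injective β ∧
      ∀ k z, ℓ k.1 z = c k * ((E z).2.2 - α k * (E z).2.1 - β k * (E z).1) := by
  have hpair : ∀ i k : Fin n, i ≠ k → ∀ x y : ℝ, x • a i + y • a k = 0 → x = 0 ∧ y = 0 := by
    intro i k hik
    exact LinearIndependent.pair_iff.1 (hind i k hik)
  -- a permuted coordinate system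
  obtain ⟨p, q, r, hp, hsum, hext, hδ⟩ : ∃ p q r : Fin 3, a j p ≠ 0 ∧
      (∀ g : Fin 3 → ℂ, ∑ k, g k = g p + g q + g r) ∧ (∀ i : Fin 3, i = p ∨ i = q ∨ i = r) ∧
      (q ≠ p ∧ r ≠ p ∧ r ≠ q) := by
    obtain ⟨p, hp⟩ := Function.ne_iff.1 (ha j)
    refine ⟨p, p + 1, p + 2, hp, ?_, ?_, ?_⟩
    · intro g; rw [Fin.sum_univ_three]; fin_cases p <;> simp <;> ring
    · intro i; clear hp; revert i p; decide
    · clear hp; revert p; decide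
  obtain ⟨hqp, hrp, hrq⟩ := hδ
  let X : Fin n → ℝ := fun k => a k p / a j p
  let Y : Fin n → ℝ := fun k => a k q - a j q * X k
  let W : Fin n → ℝ := fun k => a k r - a j r * X k
  have hX : ∀ k, a k p = a j p * X k := fun k => by simp only [X]; field_simp
  have hY : ∀ k, a k q = Y k + a j q * X k := fun k => by simp only [Y]; ring
  have hW : ∀ k, a k r = W k + a j r * X k := fun k => by simp only [W]; ring
  have hform : ∀ k z, ℓ k z = X k * ℓ j z + Y k * z q + W k * z r := by
    intro k z
    rw [hℓ, hℓ, hsum, hsum, hX k, hY k, hW k]; push_cast; ring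
  obtain ⟨s, hs⟩ := exists_avoid (fun (k : {i // i ≠ j}) (s : ℝ) => s * Y k + W k = 0 ) (by
    intro k s t h1 h2
    have h3 : (s - t) * Y k = 0 := by linear_combination h1 - h2
    rcases mul_eq_zero.1 h3 with h | h
    · exact sub_eq_zero.1 h
    · exfalso
      rw [h] at h1
      have h4 : W k = 0 := by simpa using h1
      have := (hpair k.1 j k.2 1 (-X k) (by
        funext i
        simp only [Pi.add_apply, Pi.smul_apply, smul_eq_mul, Pi.zero_apply]
        rcases hext i with rfl | rfl | rfl
        · rw [hX k]; ring
        · rw [hY k, h]; ring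
        · rw [hW k, h4]; ring)).1
      exact one_ne_zero this)
  let c : {i // i ≠ j} → ℝ := fun k => s * Y k + W k
  have hc : ∀ k, c k ≠ 0 := hs
  let α : {i // i ≠ j} → ℝ := fun k => - Y k / c k
  have hαY : ∀ k, Y k.1 = - (α k * c k) := fun k => by simp only [α]; have := hc k; field_simp
  have hcW : ∀ k, W k.1 = c k + s * (α k * c k) := fun k => by
    have : c k = s * Y k + W k := rfl
    have h2 := hαY k
    linear_combination -this - s * h2
  obtain ⟨τ, hτ⟩ := exists_avoid (fun (x : {x : {i // i ≠ j} × {i // i ≠ j} // x.1 ≠ x.2}) (τ : ℝ) =>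
      - X x.1.1 / c x.1.1 + τ * α x.1.1 = - X x.1.2 / c x.1.2 + τ * α x.1.2) (by
    rintro ⟨⟨k, l⟩, hkl⟩ s' t h1 h2
    simp only at h1 h2 hkl
    have h3 : (s' - t) * (α k - α l) = 0 := by linear_combination h1 - h2
    rcases mul_eq_zero.1 h3 with h | h
    · exact sub_eq_zero.1 h
    · exfalso
      have hα : α k = α l := sub_eq_zero.1 h
      rw [hα] at h1
      have h4 : X k * c l = X l * c k := by
        have h5 : - X k / c k = - X l / c l := by linarith
        have := hc k; have := hc l
        field_simp at h5
        linarith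
      have := (hpair k.1 l.1 (fun h => hkl (Subtype.ext h)) (c l) (-c k) (by
        funext i
        simp only [Pi.add_apply, Pi.smul_apply, smul_eq_mul, Pi.zero_apply]
        rcases hext i with rfl | rfl | rfl
        · rw [hX k, hX l]; linear_combination a j i * h4
        · rw [hY k, hY l, hαY k, hαY l, hα]; linear_combination a j i * h4
        · rw [hW k, hW l, hcW k, hcW l, hα]; linear_combination a j i * h4)).1
      exact hc l this)
  let β : {i // i ≠ j} → ℝ := fun k => - X k / c k + τ * α k
  have hβX : ∀ k, X k.1 = (τ * α k - β k) * c k := fun k => by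
    simp only [β]; have := hc k; field_simp; ring
  have hp' : (a j p : ℂ) ≠ 0 := by exact_mod_cast hp
  let E0 : (Fin 3 → ℂ) →ₗ[ℂ] (ℂ × ℂ × ℂ) :=
    { toFun := fun z => (ℓ j z, z q - τ * ℓ j z - s * z r, z r)
      map_add' := by
        intro x y
        have : ℓ j (x + y) = ℓ j x + ℓ j y := by
          simp only [hℓ, ← Finset.sum_add_distrib, Pi.add_apply, mul_add]
        simp only [this, Pi.add_apply, Prod.mk_add_mk, Prod.mk.injEq, true_and, and_true]
        ring
      map_smul' := by
        intro t x
        have : ℓ j (t • x) = t * ℓ j x := by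
          simp only [hℓ, Finset.mul_sum, Pi.smul_apply, smul_eq_mul]
          exact Finset.sum_congr rfl fun _ _ => by ring
        simp only [this, Pi.smul_apply, smul_eq_mul, Prod.smul_mk, RingHom.id_apply, Prod.mk.injEq,
          true_and, and_true]
        ring }
  have hinj : Function.Injective E0 := by
    rw [injective_iff_map_eq_zero]
    intro z hz
    have h1 : ℓ j z = 0 := congrArg Prod.fst hz
    have h2 : z q - τ * ℓ j z - s * z r = 0 := congrArg (fun x => x.2.1) hz
    have h3 : z r = 0 := congrArg (fun x => x.2.2) hz
    have h4 : z q = 0 := by rw [h1, h3] at h2; simpa using h2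
    rw [hℓ, hsum, h3, h4] at h1
    have h5 : z p = 0 := by simpa [hp'] using h1
    funext i
    rcases hext i with rfl | rfl | rfl <;> assumption
  let E := LinearEquiv.ofInjectiveOfFinrankEq E0 hinj (by simp)
  refine ⟨E, c, α, β, fun z => rfl, hc, ?_, ?_⟩
  · intro k l h
    by_contra hne
    exact hτ ⟨(k, l), hne⟩ h
  · intro k z
    change ℓ k.1 z = c k * (z r - α k * (z q - τ * ℓ j z - s * z r) - β k * ℓ j z)
    rw [hform, hβX, hαY, hcW]; push_cast; ring

open scoped unitInterval Topology

/-- If some line of a complexified-real central arrangement of `n` planes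
in `ℂ³` only contains multiple points `v` with `m_v = 2` or `gcd(m_v, n) = 1`, then the
first homology of the Milnor fiber is free abelian of rank `n − 1`. -/
theorem milnor_fiber_homology_free_of_line_with_good_points
    (n : ℕ) (hn : 1 ≤ n)
    (a : Fin n → Fin 3 → ℝ)
    (ha : ∀ i, a i ≠ 0)
    (hind : ∀ i j : Fin n, i ≠ j → LinearIndependent ℝ ![a i, a j])
    (ℓ : Fin n → (Fin 3 → ℂ) → ℂ)
    (hℓ : ∀ i z, ℓ i z = ∑ k, (a i k : ℂ) * z k)
    (m : (Fin 3 → ℂ) → ℕ)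
    (hm : ∀ v, m v = Nat.card {i : Fin n // ℓ i v = 0})
    (F : Set (Fin 3 → ℂ)) (hF : F = {z | ∏ i, ℓ i z = 1})
    (z₀ : F)
    (j : Fin n)
    (hj : ∀ v : Fin 3 → ℂ, v ≠ 0 → ℓ j v = 0 → m v = 2 ∨ Nat.gcd (m v) n = 1) :
    Nonempty (Additive (Abelianization (FundamentalGroup F z₀)) ≃+ (Fin (n - 1) → ℤ)) := by
  classical
  obtain ⟨E, c, α, β, hE1, hc, hβ, hform⟩ := coords n a ha hind ℓ hℓ j
  obtain ⟨A, rfl, rfl⟩ := Arr.exists_Arr α β hβ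
  have hcard : Fintype.card {i // i ≠ j} + 1 = n := by
    rw [Fintype.card_subtype_compl, Fintype.card_subtype_eq, Fintype.card_fin]; omega
  have hEc : Continuous E := LinearMap.continuous_of_finiteDimensional E.toLinearMap
  have hEc' : Continuous E.symm := LinearMap.continuous_of_finiteDimensional E.symm.toLinearMap
  -- the classes
  have hcl : ∀ k, (∀ l, A.α l = A.α k → l = k) ∨
      Nat.gcd (1 + (Finset.univ.filter fun l => A.α l = A.α k).card)
        (Fintype.card {i // i ≠ j} + 1) = 1 := by
    intro k
    set v := E.symm (0, 1, (A.α k : ℂ)) with hv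
    have hEv : E v = (0, 1, (A.α k : ℂ)) := by simp [hv]
    have hv0 : v ≠ 0 := by
      intro h
      rw [h, map_zero] at hEv
      have := congrArg (fun x => x.2.1) hEv
      simp at this
    have hvj : ℓ j v = 0 := by rw [← hE1, hEv]
    have hvl : ∀ l : {i // i ≠ j}, ℓ l.1 v = 0 ↔ A.α l = A.α k := by
      intro l
      rw [hform, hEv]
      have := hc l
      simp only [mul_one, mul_zero, sub_zero, mul_eq_zero, Complex.ofReal_eq_zero, this, false_or,
        sub_eq_zero, Complex.ofReal_inj]
      exact eq_comm
    have hmv : m v = 1 + (Finset.univ.filter fun l => A.α l = A.α k).card := by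
      rw [hm, Nat.card_eq_fintype_card, Fintype.card_subtype]
      have : (Finset.univ.filter fun i => ℓ i v = 0) =
          insert j ((Finset.univ.filter fun l => A.α l = A.α k).map ⟨Subtype.val, Subtype.val_injective⟩) := by
        ext i
        simp only [Finset.mem_filter, Finset.mem_univ, true_and, Finset.mem_insert, Finset.mem_map,
          Function.Embedding.coeFn_mk]
        constructor
        · intro hi
          by_cases hij : i = j
          · exact Or.inl hij
          · exact Or.inr ⟨⟨i, hij⟩, (hvl ⟨i, hij⟩).1 hi, rfl⟩
        · rintro (rfl | ⟨l, hl, rfl⟩)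
          · exact hvj
          · exact (hvl l).2 hl
      rw [this, Finset.card_insert_of_notMem, Finset.card_map, add_comm]
      simp
    rw [hcard, ← hmv]
    refine (hj v hv0 hvj).imp (fun h2 l hl => ?_) id
    have h1 : (Finset.univ.filter fun l => A.α l = A.α k).card ≤ 1 := by omega
    exact Finset.card_le_one.1 h1 l (by simp [hl]) k (by simp)
  obtain ⟨iso⟩ := A.partF hcl
  -- the covering
  have hprod : ∀ z, ∏ i, ℓ i z = ℓ j z * ∏ k : {i // i ≠ j}, ℓ k.1 z := by
    intro z
    rw [← Finset.mul_prod_erase Finset.univ (fun i => ℓ i z) (Finset.mem_univ j)]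
    congr 1
    exact (Finset.prod_subtype _ (by simp) _)
  have hFz : ∀ z, z ∈ F ↔ ℓ j z * ∏ k : {i // i ≠ j}, ℓ k.1 z = 1 := by
    intro z; rw [hF, ← hprod]; rfl
  have hFj : ∀ z : F, ℓ j z ≠ 0 := by
    intro z h
    have := (hFz z).1 z.2
    rw [h, zero_mul] at this
    exact zero_ne_one this
  have hFk : ∀ (z : F) (k : {i // i ≠ j}), ℓ k.1 z ≠ 0 := by
    intro z k h
    have := (hFz z).1 z.2
    rw [Finset.prod_eq_zero (Finset.mem_univ k) h, mul_zero] at this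
    exact zero_ne_one this
  have hdiv : ∀ (z : Fin 3 → ℂ) (k : {i // i ≠ j}), ℓ j z ≠ 0 →
      ℓ k.1 z = ℓ j z * (c k * ((E z).2.2 / ℓ j z - A.α k * ((E z).2.1 / ℓ j z) - A.β k)) := by
    intro z k h
    rw [hform, hE1]; field_simp
  have hℓc : Continuous fun z : F => ℓ j z := by
    simp only [← hE1]; fun_prop
  let q : C(F, A.S) := ⟨fun z => ⟨((E z).2.1 / ℓ j z, (E z).2.2 / ℓ j z), by
      rw [A.mem_S]
      intro k h
      apply hFk z k
      rw [hdiv z k (hFj z)]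
      simp only at h
      rw [h]; simp⟩, by
    refine Continuous.subtype_mk ?_ _
    refine Continuous.prodMk ?_ ?_
    · exact Continuous.div (by fun_prop) hℓc hFj
    · exact Continuous.div (by fun_prop) hℓc hFj⟩
  let ζ : C(F, Cs) := ⟨fun z => ⟨(ℓ j z)⁻¹, inv_ne_zero (hFj z)⟩,
    Continuous.subtype_mk (hℓc.inv₀ hFj) _⟩
  have hC : (∏ k, (c k : ℂ)) ≠ 0 :=
    Finset.prod_ne_zero_iff.2 fun k _ => by exact_mod_cast hc k
  let Q : C(A.S, Cs) := ⟨fun x => ⟨(∏ k, (c k : ℂ)) * ∏ k, (A.f k x : ℂ),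
      mul_ne_zero hC (Finset.prod_ne_zero_iff.2 fun k _ => (A.f k x).2)⟩, by
    refine Continuous.subtype_mk ?_ _
    refine continuous_const.mul (continuous_finsetProd _ fun k _ => ?_)
    exact continuous_subtype_val.comp (A.f k).continuous⟩
  have hpow : ∀ (t : ℂ) (x : A.S), t * ∏ k : {i // i ≠ j}, (t * (c k * (A.f k x : ℂ))) =
      t ^ n * Q x := by
    intro t x
    rw [Finset.prod_mul_distrib, Finset.prod_mul_distrib, Finset.prod_const, Finset.card_univ]
    change _ = t ^ n * ((∏ k, (c k : ℂ)) * ∏ k, (A.f k x : ℂ))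
    have ht : t ^ n = t ^ Fintype.card {i // i ≠ j} * t := by rw [← pow_succ, hcard]
    rw [ht]; ring
  have hζ : ∀ z, (ζ z : ℂ) ^ n = Q (q z) := by
    intro z
    have h1 := (hFz z).1 z.2
    have h2 := hpow (ℓ j z) (q z)
    have h3 : ∏ k : {i // i ≠ j}, (ℓ j z * (c k * (A.f k (q z) : ℂ))) = ∏ k : {i // i ≠ j}, ℓ k.1 z :=
      Finset.prod_congr rfl fun k _ => (hdiv z k (hFj z)).symm
    rw [h3, h1] at h2
    change ((ℓ j z)⁻¹) ^ n = _
    rw [inv_pow]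
    exact (eq_inv_of_mul_eq_one_right h2.symm).symm
  have hEr : ∀ (x : A.S) (s : ℂ), s ≠ 0 → s ^ n = Q x →
      E.symm (s⁻¹, x.1.1 * s⁻¹, x.1.2 * s⁻¹) ∈ F := by
    intro x s hs hsn
    rw [hFz]
    set v := E.symm (s⁻¹, x.1.1 * s⁻¹, x.1.2 * s⁻¹) with hv
    have hEv : E v = (s⁻¹, x.1.1 * s⁻¹, x.1.2 * s⁻¹) := by simp [hv]
    have hvj : ℓ j v = s⁻¹ := by rw [← hE1, hEv]
    have h3 : ∏ k : {i // i ≠ j}, ℓ k.1 v = ∏ k : {i // i ≠ j}, (s⁻¹ * (c k * (A.f k x : ℂ))) := by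
      refine Finset.prod_congr rfl fun k _ => ?_
      rw [hform, hEv, A.f_val]; simp only; ring
    rw [h3, hvj, hpow, ← hsn, ← mul_pow, inv_mul_cancel₀ hs, one_pow]
  let r : {p : A.S × Cs // (p.2 : ℂ) ^ n = Q p.1} → F := fun p => ⟨_, hEr p.1.1 p.1.2 p.1.2.2 p.2⟩
  have hr : Continuous r := by
    refine Continuous.subtype_mk (hEc'.comp ?_) _
    have h1 : Continuous fun p : {p : A.S × Cs // (p.2 : ℂ) ^ n = Q p.1} => ((p.1.2 : ℂ))⁻¹ :=
      Continuous.inv₀ (by fun_prop) fun p => p.1.2.2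
    have h2 : Continuous fun p : {p : A.S × Cs // (p.2 : ℂ) ^ n = Q p.1} => (p.1.1 : ℂ × ℂ) := by
      fun_prop
    exact h1.prodMk ((h2.fst.mul h1).prodMk (h2.snd.mul h1))
  have hEsymm : ∀ p, E (r p) = ((p.1.2 : ℂ)⁻¹, p.1.1.1.1 * (p.1.2 : ℂ)⁻¹, p.1.1.1.2 * (p.1.2 : ℂ)⁻¹) :=
    fun p => E.apply_symm_apply _
  have hq : ∀ p, q (r p) = p.1.1 := by
    intro p
    have hs := p.1.2.2
    apply Subtype.ext
    change ((E (r p)).2.1 / ℓ j (r p), (E (r p)).2.2 / ℓ j (r p)) = _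
    rw [← hE1, hEsymm]
    apply Prod.ext
    · simp only; field_simp
    · simp only; field_simp
  have hrz : ∀ z, r ⟨(q z, ζ z), hζ z⟩ = z := by
    intro z
    have hz := hFj z
    apply Subtype.ext
    apply E.injective
    rw [hEsymm]
    change (((ℓ j z)⁻¹)⁻¹, (E z).2.1 / ℓ j z * ((ℓ j z)⁻¹)⁻¹, (E z).2.2 / ℓ j z * ((ℓ j z)⁻¹)⁻¹) = E z
    rw [inv_inv, div_mul_cancel₀ _ hz, div_mul_cancel₀ _ hz, ← hE1]
  obtain ⟨φ, hφ, hrange⟩ := partC q ζ Q n (by omega) hζ r hr hq hrz z₀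
  obtain ⟨γ⟩ := A.joined (q z₀) A.b
  obtain ⟨e, he⟩ := windZ_change γ
  let ψ : FundamentalGroup F z₀ →* FundamentalGroup A.S A.b := e.toMonoidHom.comp φ
  have hψ : Function.Injective ψ := e.injective.comp hφ
  have hψr : ψ.range = KA fun l => wind (A.f l) A.b := by
    ext g
    rw [mem_KA, degA_apply]
    have h1 : g ∈ ψ.range ↔ e.symm g ∈ φ.range := by
      constructor
      · rintro ⟨x, rfl⟩; exact ⟨x, by simp [ψ]⟩
      · rintro ⟨x, hx⟩; exact ⟨x, by simp [ψ, hx]⟩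
    rw [h1, hrange, windZ_prod Finset.univ A.f Q _ hC (fun _ => rfl)]
    simp only [wind_toAdd]
    have h2 : ∀ k, windZ (A.f k) (e.symm g) = windZ (A.f k) g := by
      intro k; rw [← he, e.apply_symm_apply]
    simp only [h2]
    have hnn : (n : ℤ) = (Fintype.card {i // i ≠ j} : ℤ) + 1 := by exact_mod_cast hcard.symm
    rw [hnn]
  let e1 : FundamentalGroup F z₀ ≃* (KA fun l => wind (A.f l) A.b) :=
    (MonoidHom.ofInjective hψ).trans (MulEquiv.subgroupCongr hψr)
  let e2 := MulEquiv.toAdditive e1.abelianizationCongr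
  have hfin : Fintype.card {i // i ≠ j} = Fintype.card (Fin (n - 1)) := by
    rw [Fintype.card_fin]; omega
  let e3 : ({i // i ≠ j} → ℤ) ≃+ (Fin (n - 1) → ℤ) :=
    (LinearEquiv.funCongrLeft ℤ ℤ (Fintype.equivOfCardEq hfin).symm).toAddEquiv
  exact ⟨(e2.trans iso).trans e3⟩
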